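/- arXiv:2603.25392 — 4 statements merged into one kernel-verified Lean document; each statement's English description precedes it below -/
import Mathlib

section
/- Let B_n^{(k)} denote the poly-Bernoulli numbers, defined by Σ_{n≥0} B_n^{(k)} x^n/n! = Li_k(1−e^{−x})/(1−e^{−x}) where Li_k(z) = Σ_{m≥1} z^m/m^k (for k ≤ 0 this is a rational function). Let p_n be Lehmer's polynomials (p_{−1}=0, q_{−1}=1, with recurrences p_{n+1}(x) = 2(nx+1)p_n(x)+2x(1−x)p_n'(x)+q_n(x), q_{n+1}(x) = (2(n+1)x+1)q_n(x)+2x(1−x)q_n'(x)). Then for every integer n ≥ 0: (1/3)·(2/3)^n·p_n(1/4) = (1/3)·Σ_{k=0}^n B_{n−k}^{(−k)}. -/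
open Polynomial

/-- Lehmer's polynomials `q_n` for `n ≥ -1`, indexed so that `lehmerQ (n+1) = q_n`
(`lehmerQ 0 = q_{-1} = 1`), with recurrence
`q_{n+1}(x) = (2(n+1)x + 1) q_n(x) + 2x(1-x) q_n'(x)`. -/
noncomputable def lehmerQ : ℕ → Polynomial ℤ
  | 0 => 1
  | (k + 1) => (C (2 * (k : ℤ)) * X + 1) * lehmerQ k
      + 2 * X * (1 - X) * derivative (lehmerQ k)

/-- Lehmer's polynomials `p_n` for `n ≥ -1`, indexed so that `lehmerP (n+1) = p_n`
(`lehmerP 0 = p_{-1} = 0`), with recurrence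
`p_{n+1}(x) = 2(nx + 1) p_n(x) + 2x(1-x) p_n'(x) + q_n(x)`. -/
noncomputable def lehmerP : ℕ → Polynomial ℤ
  | 0 => 0
  | (k + 1) => 2 * (C ((k : ℤ) - 1) * X + 1) * lehmerP k
      + 2 * X * (1 - X) * derivative (lehmerP k) + lehmerQ k

/-- The polylogarithm `Li_{-k}(z)` of nonpositive integer order, as a rational function:
`Li_0(z) = z/(1-z)` and `Li_{-(k+1)}(z) = z · d/dz Li_{-k}(z)`. -/
noncomputable def negPolylog : ℕ → ℝ → ℝ
  | 0, z => z / (1 - z)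
  | (k + 1), z => z * deriv (negPolylog k) z

/-- The poly-Bernoulli number `B_n^{(-k)}` with nonpositive index `-k`, defined as the `n`-th
Taylor coefficient (times `n!`) of `x ↦ Li_{-k}(1-e^{-x})/(1-e^{-x})` at `x = 0`
(with the removable singularity at `0` filled in by its limit value `1`). -/
noncomputable def polyBernoulli (n k : ℕ) : ℝ :=
  iteratedDeriv n
    (fun x : ℝ => if x = 0 then 1 else
      negPolylog k (1 - Real.exp (-x)) / (1 - Real.exp (-x))) 0

/-- Weighted binomial transform. -/
def bc {R : Type} [CommRing R] (c : R) : (ℕ → R) → ℕ → R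
  | f, 0 => f 0
  | f, (m + 1) => c * bc c f m + bc c (fun j => f (j + 1)) m

theorem bc_add {R : Type} [CommRing R] (c : R) (f g : ℕ → R) (m : ℕ) :
    bc c (fun j => f j + g j) m = bc c f m + bc c g m := by
  induction m generalizing f g with
  | zero => rfl
  | succ m ih => simp only [bc, ih f g, ih (fun j => f (j+1)) (fun j => g (j+1))]; ring

theorem bc_mul {R : Type} [CommRing R] (c a : R) (f : ℕ → R) (m : ℕ) :
    bc c (fun j => a * f j) m = a * bc c f m := by
  induction m generalizing f with
  | zero => rfl
  | succ m ih => simp only [bc, ih f, ih (fun j => f (j+1))]; ring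

theorem bc_sub {R : Type} [CommRing R] (c : R) (f g : ℕ → R) (m : ℕ) :
    bc c (fun j => f j - g j) m = bc c f m - bc c g m := by
  induction m generalizing f g with
  | zero => rfl
  | succ m ih => simp only [bc, ih f g, ih (fun j => f (j+1)) (fun j => g (j+1))]; ring

theorem bc_lt {R : Type} [CommRing R] (c : R) (f : ℕ → R) (m : ℕ) (h : ∀ j < m, f j = 0) :
    bc c f m = f m := by
  induction m generalizing f with
  | zero => rfl
  | succ m ih =>
    simp only [bc]
    rw [ih f (fun j hj => h j (by omega)), ih (fun j => f (j+1)) (fun j hj => h (j+1) (by omega)),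
      h m (by omega)]
    ring

theorem bc_scale {R : Type} [CommRing R] (c : R) (f : ℕ → R) (m : ℕ) :
    bc c (fun j => c ^ j * f j) m = c ^ m * bc 1 f m := by
  induction m generalizing f with
  | zero => rfl
  | succ m ih =>
    have h2 : (fun j => c ^ (j+1) * f (j+1)) = fun j => c * (c ^ j * f (j+1)) := by
      funext j; ring
    simp only [bc, h2, bc_mul, ih f, ih (fun j => f (j+1))]; ring

theorem bc_hom {R S : Type} [CommRing R] [CommRing S] (φ : R →+* S) (c : R) (f : ℕ → R) (m : ℕ) :
    φ (bc c f m) = bc (φ c) (fun j => φ (f j)) m := by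
  induction m generalizing f with
  | zero => rfl
  | succ m ih => simp only [bc, map_add, map_mul, ih]

/-! Lehmer side -/

noncomputable def cc : ℤ[X] := 2 * (1 - X)

noncomputable def WW (a : ℤ[X]) (f : ℤ[X]) : ℤ[X] :=
  2 * a * X * f + 2 * X * (1 - X) * derivative f

theorem WW_add (a f g) : WW a (f + g) = WW a f + WW a g := by
  simp only [WW, derivative_add]; ring

theorem WW_sub (a f g) : WW a (f - g) = WW a f - WW a g := by
  simp only [WW, derivative_sub]; ring

theorem WW_c (a f) : WW (a + 1) (cc * f) = cc * WW a f := by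
  simp only [WW, cc, derivative_mul, derivative_sub, derivative_X, derivative_one,
    derivative_ofNat]; ring

theorem WW_h (a f) : WW (a + 1) ((1 - X) * f) = (1 - X) * WW a f := by
  simp only [WW, derivative_mul, derivative_sub, derivative_X, derivative_one]; ring

theorem WW_X (a f) : WW a (X * f) = X * WW a f + X * cc * f := by
  simp only [WW, cc, derivative_mul, derivative_X]; ring

theorem WW_cpow (m : ℕ) : WW m (cc ^ m) = 0 := by
  induction m with
  | zero => simp [WW]
  | succ m ih => rw [pow_succ', Nat.cast_succ, WW_c, ih, mul_zero]

theorem WW_bc (a : ℤ[X]) (f : ℕ → ℤ[X]) (m : ℕ) :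
    WW (m + a) (bc cc f m) = bc cc (fun j => WW (j + a) (f j)) m := by
  induction m generalizing a f with
  | zero => rfl
  | succ m ih =>
    simp only [bc]
    rw [WW_add, ← ih a f]
    have e : ((m + 1 : ℕ) : ℤ[X]) + a = (m + a) + 1 := by push_cast; ring
    have e2 : ((m + 1 : ℕ) : ℤ[X]) + a = m + (a + 1) := by push_cast; ring
    congr 1
    · rw [e, WW_c]
    · rw [e2, ih]
      congr 1
      funext j
      congr 1
      push_cast; ring

theorem q_rec (k : ℕ) : lehmerQ (k + 1) = WW k (lehmerQ k) + lehmerQ k := by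
  simp only [lehmerQ, WW, map_mul, map_natCast, map_ofNat]; ring

theorem p_rec (k : ℕ) :
    lehmerP (k + 1) = WW (k - 1) (lehmerP k) + 2 * lehmerP k + lehmerQ k := by
  simp only [lehmerP, WW, map_sub, map_natCast, map_one]; ring

theorem T_id (m : ℕ) :
    lehmerQ (m + 1) - X * bc cc (fun j => lehmerQ (j + 1)) m = (1 - X) * lehmerQ m := by
  induction m with
  | zero => simp [bc, lehmerQ]
  | succ m ih =>
    have h := congrArg (WW (m + 1)) ih
    rw [WW_sub, WW_X, WW_h, WW_bc] at h
    have e : (fun j : ℕ => WW (j + 1) (lehmerQ (j + 1))) =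
        fun j => lehmerQ (j + 1 + 1) - lehmerQ (j + 1) := by
      funext j; have := q_rec (j + 1); push_cast at this; rw [this]; ring
    rw [e, bc_sub] at h
    simp only [bc]
    have h1 := q_rec (m + 1)
    have h2 := q_rec m
    push_cast at h1
    linear_combination h + h1 - (1 - X) * h2 + ih

theorem S_id (m : ℕ) :
    lehmerP (m + 1) - X * bc cc (fun j => lehmerP (j + 1)) m
      = (1 - X) * lehmerP m + (1 - X) * cc ^ m := by
  induction m with
  | zero => simp [bc, lehmerP, lehmerQ]
  | succ m ih =>
    have h := congrArg (WW m) ih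
    have e0 : (fun j : ℕ => WW ((j : ℤ[X]) + 0) (lehmerP (j + 1))) =
        fun j => lehmerP (j + 1 + 1) - 2 * lehmerP (j + 1) - lehmerQ (j + 1) := by
      funext j; have := p_rec (j + 1); push_cast at this
      rw [add_sub_cancel_right] at this
      rw [this, add_zero]; ring
    have e1 := WW_bc 0 (fun j => lehmerP (j + 1)) m
    rw [e0, bc_sub, bc_sub, bc_mul, add_zero] at e1
    have e2 := WW_h (m - 1) (lehmerP m)
    rw [sub_add_cancel] at e2
    have e3 : WW m ((1 - X) * cc ^ m) = - X * cc * cc ^ m := by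
      have : (1 - X) * cc ^ m = cc ^ m - X * cc ^ m := by ring
      rw [this, WW_sub, WW_X, WW_cpow]; ring
    rw [WW_sub, WW_X, WW_add, e1, e2, e3] at h
    simp only [bc]
    have h1 := p_rec (m + 1)
    have h2 := p_rec m
    push_cast at h1
    rw [add_sub_cancel_right] at h1
    have t := T_id m
    have hc : cc = 2 * (1 - X) := rfl
    rw [pow_succ]
    linear_combination h + h1 - (1 - X) * h2 + 2 * ih + t - cc ^ m * hc

/-! Double sequences -/

def bx (G : ℕ → ℕ → ℝ) : ℕ → ℕ → ℝ := fun n k => bc 1 (fun i => G i k) n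
def bY (G : ℕ → ℕ → ℝ) : ℕ → ℕ → ℝ := fun n k => bc 1 (G n) k
def dx (G : ℕ → ℕ → ℝ) : ℕ → ℕ → ℝ := fun n k => G (n + 1) k
def dy (G : ℕ → ℕ → ℝ) : ℕ → ℕ → ℝ := fun n k => G n (k + 1)

theorem bx_add (G H) : bx (G + H) = bx G + bx H := by
  funext n k; exact bc_add _ _ _ _
theorem bx_sub (G H) : bx (G - H) = bx G - bx H := by
  funext n k; exact bc_sub _ _ _ _
theorem bY_add (G H) : bY (G + H) = bY G + bY H := by
  funext n k; exact bc_add _ _ _ _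
theorem bY_sub (G H) : bY (G - H) = bY G - bY H := by
  funext n k; exact bc_sub _ _ _ _
theorem dx_add (G H) : dx (G + H) = dx G + dx H := rfl
theorem dx_sub (G H) : dx (G - H) = dx G - dx H := rfl
theorem dy_add (G H) : dy (G + H) = dy G + dy H := rfl
theorem dy_sub (G H) : dy (G - H) = dy G - dy H := rfl
theorem dx_bx (G) : dx (bx G) = bx G + bx (dx G) := by
  funext n k; simp [dx, bx, bc]
theorem dy_bY (G) : dy (bY G) = bY G + bY (dy G) := by
  funext n k; simp [dy, bY, bc]; rfl
theorem dx_bY (G) : dx (bY G) = bY (dx G) := rfl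
theorem dy_bx (G) : dy (bx G) = bx (dy G) := rfl
theorem dy_dx (G) : dy (dx G) = dx (dy G) := rfl

theorem bx_bY (G) : bx (bY G) = bY (bx G) := by
  funext n k
  induction n generalizing G with
  | zero => rfl
  | succ n ih =>
    have h : ∀ G, bx G (n+1) k = bx G n k + bx (dx G) n k := fun G =>
      congrFun (congrFun (dx_bx G) n) k
    have h2 : bY (bx G) (n+1) k = bY (dx (bx G)) n k := rfl
    rw [h, ih, dx_bY, ih, h2, dx_bx, bY_add]; rfl

/-- antidiagonal sums -/
def Ph : ℕ → (ℕ → ℕ → ℝ) → ℝ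
  | 0, _ => 0
  | (m + 1), G => Ph m (dx G) + G 0 m

theorem Ph_add (m G H) : Ph m (G + H) = Ph m G + Ph m H := by
  induction m generalizing G H with
  | zero => simp [Ph]
  | succ m ih => simp only [Ph, dx_add, ih, Pi.add_apply]; ring

theorem Ph_sub (m G H) : Ph m (G - H) = Ph m G - Ph m H := by
  induction m generalizing G H with
  | zero => simp [Ph]
  | succ m ih => simp only [Ph, dx_sub, ih, Pi.sub_apply]; ring

theorem Ph_y (m G) : Ph (m + 1) G = Ph m (dy G) + G m 0 := by
  induction m generalizing G with
  | zero => simp [Ph]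
  | succ m ih =>
    rw [Ph, ih]
    simp only [Ph, dy_dx]
    simp only [dx, dy]; ring

theorem Ph_sum (m G) : Ph (m + 1) G = ∑ k ∈ Finset.range (m + 1), G (m - k) k := by
  induction m generalizing G with
  | zero => simp [Ph]
  | succ m ih =>
    rw [Ph, ih, Finset.sum_range_succ _ (m+1), Nat.sub_self]
    congr 1
    apply Finset.sum_congr rfl
    intro k hk
    rw [Finset.mem_range] at hk
    simp only [dx]
    congr 1; omega

theorem Ph_V (m G) : Ph m (bY (bx G)) = bc 1 (fun j => Ph j G) m := by
  induction m generalizing G with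
  | zero => simp [Ph, bc]
  | succ m ih =>
    have h : (fun j => Ph (j+1) G) = fun j => Ph j (dx G) + G 0 j := rfl
    rw [Ph, dx_bY, dx_bx, bY_add, Ph_add, ih, ih, bc, h, bc_add]
    have : bY (bx G) 0 m = bc 1 (fun j => G 0 j) m := rfl
    rw [this]; ring

theorem eq_b (F : ℕ → ℕ → ℝ) (h0 : ∀ n, F n 0 = 1)
    (ha : dy F = F + bx (dx F) - dx F) : dx F = F + bY (dy F) - dy F := by
  set W := F + bY (dy F) - dy F - dx F with hW
  have hrec : dy W = W + W + bx (dx W) - dx W := by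
    have e1 : dy W = dy F + (bY (dy F) + bY (dy (dy F))) - dy (dy F) - dx (dy F) := by
      rw [hW]; simp only [dy_add, dy_sub, dy_bY, dy_dx]
    have e2 : dy (dy F) = dy F + bx (dx (dy F)) - dx (dy F) := by
      conv_lhs => rw [ha]
      rfl
    have e3 : dx (dy F) = dx F + (bx (dx F) + bx (dx (dx F))) - dx (dx F) := by
      conv_lhs => rw [ha]
      rw [dx_sub, dx_add, dx_bx]
    have e4 : bY (dy (dy F)) = bY (dy F) + bY (bx (dx (dy F))) - bY (dx (dy F)) := by
      rw [e2, bY_sub, bY_add]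
    have e5 : dx W = dx F + bY (dx (dy F)) - dx (dy F) - dx (dx F) := by
      rw [hW]; simp only [dx_add, dx_sub, dx_bY]
    have e6 : bx (dx W) = bx (dx F) + bY (bx (dx (dy F))) - bx (dx (dy F)) - bx (dx (dx F)) := by
      rw [e5]; simp only [bx_add, bx_sub, bx_bY]
    rw [e1, e6, e5, e4, e2, hW]
    linear_combination ha + ha - e3
  have hz : ∀ k n, W n k = 0 := by
    intro k
    induction k with
    | zero =>
      intro n
      have : bY (dy F) n 0 = dy F n 0 := rfl
      simp only [hW, Pi.sub_apply, Pi.add_apply, this, dx, h0]; ring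
    | succ k ih =>
      intro n
      have h := congrFun (congrFun hrec n) k
      have hb : bx (dx W) n k = dx W n k := bc_lt _ _ _ (fun j _ => ih (j+1))
      simp only [Pi.sub_apply, Pi.add_apply, hb, ih] at h
      simp only [dy] at h
      rw [h]; ring
  have hW0 : W = 0 := by funext n k; exact hz k n
  rw [hW0] at hW
  exact (sub_eq_zero.mp hW.symm).symm

theorem h_rec (F : ℕ → ℕ → ℝ) (h0 : ∀ n, F n 0 = 1)
    (ha : dy F = F + bx (dx F) - dx F) (m : ℕ) :
    4 * Ph (m+1) F - bc 1 (fun j => Ph (j+1) F) m = 2 * Ph m F + 3 := by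
  have hb := eq_b F h0 ha
  have h0' : ∀ k, F 0 k = 1 := by
    intro k
    induction k with
    | zero => exact h0 0
    | succ k ih =>
      have h := congrFun (congrFun ha 0) k
      have : bx (dx F) 0 k = dx F 0 k := rfl
      simp only [Pi.sub_apply, Pi.add_apply, this, ih] at h
      simp only [dy] at h
      rw [h]; ring
  have hx : ∀ j, Ph (j+1) F = Ph j (dx F) + 1 := fun j => by rw [Ph, h0']
  have hy : ∀ j, Ph (j+1) F = Ph j (dy F) + 1 := fun j => by rw [Ph_y, h0]
  have hxx : bc 1 (fun j => Ph (j+1) F) m = Ph m (bY (bx (dx F))) + bc 1 (fun _ => 1) m := by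
    simp only [hx]; rw [bc_add, Ph_V]
  have hyy : bc 1 (fun j => Ph (j+1) F) m = Ph m (bY (bx (dy F))) + bc 1 (fun _ => 1) m := by
    simp only [hy]; rw [bc_add, Ph_V]
  have a1 : bx (dx F) = dy F + dx F - F := by linear_combination -ha
  have b1 : bY (dy F) = dx F + dy F - F := by linear_combination -hb
  have a2 : bY (bx (dx F)) = dx F + dy F - F + bY (dx F) - bY F := by
    rw [a1, bY_sub, bY_add, b1]
  have b2 : bY (bx (dy F)) = bx (dx F) + bx (dy F) - bx F := by
    rw [← bx_bY, b1, bx_sub, bx_add]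
  rw [a1] at b2
  rw [a2] at hxx
  rw [b2] at hyy
  simp only [Ph_add, Ph_sub] at hxx hyy
  have k1 := Ph_y m (bY F - bx F)
  have k2 : Ph (m+1) (bY F - bx F) = Ph m (dx (bY F - bx F)) + (bY F - bx F) 0 m := rfl
  have c1 : (bY F - bx F) 0 m = bc 1 (fun _ => 1) m - 1 := by
    have : bY F 0 = bc 1 (fun _ => 1) := by
      change bc 1 (F 0) = _
      congr 1; funext k; exact h0' k
    rw [Pi.sub_apply, Pi.sub_apply, this]
    have : bx F 0 m = F 0 m := rfl
    rw [this, h0']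
  have c2 : (bY F - bx F) m 0 = 1 - bc 1 (fun _ => 1) m := by
    have : bx F m 0 = bc 1 (fun _ => 1) m := by
      change bc 1 (fun i => F i 0) m = _
      simp only [h0]
    rw [Pi.sub_apply, Pi.sub_apply, this]
    have : bY F m 0 = F m 0 := rfl
    rw [this, h0]
  rw [c2, dy_sub, dy_bY, dy_bx, b1] at k1
  rw [c1, dx_sub, dx_bx, dx_bY, a1] at k2
  simp only [Ph_add, Ph_sub] at k1 k2
  have x1 := hx m
  have y1 := hy m
  linear_combination (-1/2) * hxx - (1/2) * hyy + 2 * x1 + 2 * y1 - (1/2) * k1 + (1/2) * k2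

/-! Analytic side -/

noncomputable def th (f : ℝ[X]) : ℝ[X] := X * derivative f

noncomputable def ff : ℕ → ℝ[X]
  | 0 => X
  | (k + 1) => ff k + (X - 1) * th (ff k)

theorem ff_one (k : ℕ) : (ff k).eval 1 = 1 := by
  induction k with
  | zero => simp [ff]
  | succ k ih => simp [ff, ih]

theorem negPolylog_eq (k : ℕ) : ∀ z : ℝ, z < 1 → negPolylog k z = z * (ff k).eval (1 / (1 - z)) := by
  induction k with
  | zero => intro z hz; simp [negPolylog, ff]; rfl
  | succ k ih =>
    intro z hz
    have hz' : (1 - z) ≠ 0 := by linarith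
    have he : negPolylog k =ᶠ[nhds z] fun z => z * (ff k).eval (1 / (1 - z)) := by
      filter_upwards [Iio_mem_nhds hz] with w hw using ih w hw
    have hi : HasDerivAt (fun z : ℝ => 1 / (1 - z)) (1 / (1 - z) ^ 2) z := by
      have := ((hasDerivAt_id z).const_sub 1).inv hz'
      have e : (fun z : ℝ => 1 / (1 - z)) = (fun x => 1 - id x)⁻¹ := by
        funext w; simp
      rw [e]
      rw [neg_neg] at this
      exact this
    have hd := (hasDerivAt_id z).mul (((ff k).hasDerivAt (1 / (1 - z))).comp z hi)
    have hd' : deriv (fun z => z * (ff k).eval (1 / (1 - z))) z = _ := hd.deriv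
    rw [negPolylog, he.deriv_eq, hd']
    simp only [ff, th, eval_add, eval_mul, eval_sub, eval_X, eval_one, id, Function.comp]
    field_simp
    ring

theorem iter_exp (n : ℕ) (f : ℝ[X]) :
    iteratedDeriv n (fun x : ℝ => f.eval (Real.exp x)) = fun x => (th^[n] f).eval (Real.exp x) := by
  induction n generalizing f with
  | zero => simp
  | succ n ih =>
    rw [iteratedDeriv_succ']
    have : deriv (fun x : ℝ => f.eval (Real.exp x)) = fun x => (th f).eval (Real.exp x) := by
      funext x
      have := ((f.hasDerivAt (Real.exp x)).comp x (Real.hasDerivAt_exp x)).deriv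
      have h2 : deriv (fun x : ℝ => f.eval (Real.exp x)) x = _ := this
      rw [h2]; simp [th]; ring
    rw [this, ih]; rfl

theorem polyB_eq (n k : ℕ) : polyBernoulli n k = (th^[n] (ff k)).eval 1 := by
  have : (fun x : ℝ => if x = 0 then 1 else
      negPolylog k (1 - Real.exp (-x)) / (1 - Real.exp (-x))) =
      fun x => (ff k).eval (Real.exp x) := by
    funext x
    split_ifs with h
    · simp [h, ff_one]
    · rw [negPolylog_eq _ _ (by linarith [Real.exp_pos (-x)])]
      have hne : 1 - Real.exp (-x) ≠ 0 := by
        intro h2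
        have : Real.exp (-x) = 1 := by linarith
        rw [Real.exp_eq_one_iff] at this
        exact h (by linarith)
      rw [mul_div_cancel_left₀ _ hne]
      congr 1
      rw [sub_sub_cancel, Real.exp_neg, one_div, inv_inv]
  rw [polyBernoulli, this, iter_exp]; simp

theorem th_add (f g) : th (f + g) = th f + th g := by simp only [th, derivative_add]; ring
theorem th_sub (f g) : th (f - g) = th f - th g := by simp only [th, derivative_sub]; ring
theorem thn_add (n f g) : th^[n] (f + g) = th^[n] f + th^[n] g := by
  induction n generalizing f g with
  | zero => rfl
  | succ n ih => simp only [Function.iterate_succ_apply, th_add, ih]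
theorem thn_sub (n f g) : th^[n] (f - g) = th^[n] f - th^[n] g := by
  induction n generalizing f g with
  | zero => rfl
  | succ n ih => simp only [Function.iterate_succ_apply, th_sub, ih]
theorem thn_X (n f) : (th^[n] (X * f)).eval 1 = bc 1 (fun i => (th^[i] f).eval 1) n := by
  induction n generalizing f with
  | zero => simp [bc]
  | succ n ih =>
    have : th (X * f) = X * f + X * th f := by
      simp only [th, derivative_mul, derivative_X]; ring
    simp only [Function.iterate_succ_apply, this, thn_add, eval_add, ih, bc, one_mul]

theorem polyB_zero (n : ℕ) : polyBernoulli n 0 = 1 := by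
  rw [polyB_eq, ff]
  have : th X = X := by simp [th]
  rw [Function.iterate_fixed this]; simp

theorem polyB_a : dy polyBernoulli = polyBernoulli + bx (dx polyBernoulli) - dx polyBernoulli := by
  funext n k
  simp only [Pi.add_apply, Pi.sub_apply, dy, bx, dx, polyB_eq, ff, thn_add, eval_add, sub_mul,
    one_mul, thn_sub, eval_sub, thn_X, Function.iterate_succ_apply]
  ring

theorem P_rec (m : ℕ) :
    aeval ((1 : ℝ) / 4) (lehmerP (m + 1))
      - 1 / 4 * bc (3 / 2) (fun j => aeval ((1 : ℝ) / 4) (lehmerP (j + 1))) m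
    = 3 / 4 * aeval ((1 : ℝ) / 4) (lehmerP m) + 3 / 4 * (3 / 2) ^ m := by
  have h := congrArg (aeval ((1 : ℝ) / 4)) (S_id m)
  have hb := bc_hom (aeval ((1 : ℝ) / 4) : ℤ[X] →ₐ[ℤ] ℝ).toRingHom cc
    (fun j => lehmerP (j + 1)) m
  have hc : aeval ((1 : ℝ) / 4) cc = 3 / 2 := by
    simp only [cc, map_mul, map_sub, map_one, aeval_X]
    rw [map_ofNat]; norm_num
  simp only [AlgHom.toRingHom_eq_coe, RingHom.coe_coe, hc] at hb
  simp only [map_sub, map_mul, map_add, map_pow, aeval_X, map_one, hb, hc] at h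
  rw [h]; norm_num

theorem P_eq (m : ℕ) :
    3 / 2 * (2 / 3) ^ m * aeval ((1 : ℝ) / 4) (lehmerP m) = Ph m polyBernoulli := by
  set g : ℕ → ℝ := fun m => 3 / 2 * (2 / 3) ^ m * aeval ((1 : ℝ) / 4) (lehmerP m) with hg
  have hP : ∀ m, aeval ((1 : ℝ) / 4) (lehmerP m) = 2 / 3 * (3 / 2) ^ m * g m := by
    intro m
    have : ((2:ℝ) / 3) ^ m * (3 / 2) ^ m = 1 := by rw [← mul_pow]; norm_num
    simp only [hg]
    linear_combination (-aeval ((1 : ℝ) / 4) (lehmerP m)) * this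
  have hgr : ∀ m, 4 * g (m+1) - bc 1 (fun j => g (j+1)) m = 2 * g m + 3 := by
    intro m
    have h := P_rec m
    have e : (fun j => aeval ((1 : ℝ) / 4) (lehmerP (j + 1))) =
        fun j => (3 / 2 : ℝ) ^ j * g (j + 1) := by
      funext j; rw [hP, pow_succ]; ring
    rw [e, bc_scale, hP, hP] at h
    have hp : ((3:ℝ) / 2) ^ m ≠ 0 := by positivity
    apply mul_left_cancel₀ hp
    rw [pow_succ] at h
    linear_combination 4 * h
  have hr := h_rec polyBernoulli polyB_zero polyB_a
  change g m = _
  induction m using Nat.strong_induction_on with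
  | _ m ih =>
    cases m with
    | zero => simp [hg, lehmerP, Ph]
    | succ m =>
      have h1 := hgr m
      have h2 := hr m
      have h3 := ih m (by omega)
      have h4 := bc_lt (1:ℝ) (fun j => g (j+1) - Ph (j+1) polyBernoulli) m
        (fun j hj => sub_eq_zero.mpr (ih (j+1) (by omega)))
      rw [bc_sub] at h4
      linarith

theorem lehmerP_quarter_eq_polyBernoulli_sum (n : ℕ) :
    (1 / 3 : ℝ) * (2 / 3) ^ n * aeval ((1 : ℝ) / 4) (lehmerP (n + 1)) =
      1 / 3 * ∑ k ∈ Finset.range (n + 1), polyBernoulli (n - k) k := by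
  rw [← Ph_sum, ← P_eq, pow_succ]; ring
end

section
/- For 0 < σ < π and real s > 1, the shifted log-sine integral satisfies SLs(s;σ) = ζ_CB(s; sin(σ/2)) − (σ/π)·η_CB(s; sin(σ/2)). -/
/-- The half-integer binomial coefficient `binom(2m+1, m+1/2) = Γ(2m+2)/Γ(m+3/2)²`. -/
noncomputable def halfBinom (m : ℕ) : ℝ :=
  Real.Gamma (2 * m + 2) / (Real.Gamma ((m : ℝ) + 3 / 2)) ^ 2

open MeasureTheory Filter Topology in
lemma aux_tendsto (φ : ℝ) (h0 : 0 < φ) (h1 : φ < Real.pi / 2) (C : ℝ) :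
    Tendsto (fun N : ℕ => C * ((2 * N + 2) * Real.sin φ ^ (2 * N)) * φ) atTop (𝓝 0) := by
  have hs0 : 0 < Real.sin φ := Real.sin_pos_of_pos_of_lt_pi h0 (by linarith [Real.pi_pos])
  have hc0 : 0 < Real.cos φ := Real.cos_pos_of_mem_Ioo ⟨by linarith, h1⟩
  have hs1 : Real.sin φ ^ 2 < 1 := by nlinarith [Real.sin_sq_add_cos_sq φ]
  have t1 := tendsto_self_mul_const_pow_of_lt_one (sq_nonneg (Real.sin φ)) hs1
  have t2 := tendsto_pow_atTop_nhds_zero_of_lt_one (sq_nonneg (Real.sin φ)) hs1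
  have := (((t1.const_mul 2).add (t2.const_mul 2)).const_mul C).mul_const φ
  simp only [mul_zero, add_zero, zero_mul] at this
  refine this.congr (fun N => ?_)
  rw [← pow_mul]; ring

noncomputable def eC (m : ℕ) : ℝ := 4 ^ (m + 1) / ((Nat.choose (2 * (m + 1)) (m + 1) : ℝ) * ((m : ℝ) + 1))
noncomputable def bC (m : ℕ) : ℝ := (Nat.centralBinom m : ℝ) / 4 ^ m

lemma cb_succ (m : ℕ) : ((m : ℝ) + 1) * (Nat.centralBinom (m + 1) : ℝ)
    = 2 * (2 * m + 1) * (Nat.centralBinom m : ℝ) := by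
  exact_mod_cast Nat.succ_mul_centralBinom_succ m

lemma cb_pos (m : ℕ) : (0 : ℝ) < (Nat.centralBinom m : ℝ) := by
  exact_mod_cast Nat.centralBinom_pos m

lemma eC_eq (m : ℕ) : eC m = 4 ^ (m + 1) / ((Nat.centralBinom (m + 1) : ℝ) * ((m : ℝ) + 1)) := rfl

lemma eC_pos (m : ℕ) : 0 < eC m := by
  rw [eC_eq]; have := cb_pos (m + 1); positivity

lemma bC_pos (m : ℕ) : 0 < bC m := by
  have := cb_pos m; unfold bC; positivity

lemma eC_succ (m : ℕ) : eC (m + 1) * (2 * m + 3) = eC m * (2 * m + 2) := by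
  rw [eC_eq, eC_eq]
  have h := cb_succ (m + 1)
  have h1 := cb_pos (m + 1)
  have h2 := cb_pos (m + 1 + 1)
  push_cast at h ⊢
  have h3 : (Nat.centralBinom (m + 1 + 1) : ℝ) * ((m : ℝ) + 1 + 1) =
    2 * (2 * m + 3) * (Nat.centralBinom (m + 1) : ℝ) := by linarith
  rw [h3]
  field_simp
  ring

lemma bC_succ (m : ℕ) : bC (m + 1) * (2 * m + 2) = bC m * (2 * m + 1) := by
  unfold bC
  have h := cb_succ m
  rw [pow_succ]
  field_simp
  linarith

lemma eC_le (m : ℕ) : eC m ≤ 2 := by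
  induction m with
  | zero => norm_num [eC]
  | succ k ih =>
    have := eC_succ k
    have := eC_pos (k+1)
    have hk : (0:ℝ) ≤ k := k.cast_nonneg
    nlinarith

lemma bC_le (m : ℕ) : bC m ≤ 1 := by
  induction m with
  | zero => norm_num [bC]
  | succ k ih =>
    have := bC_succ k
    have := bC_pos (k+1)
    have hk : (0:ℝ) ≤ k := k.cast_nonneg
    nlinarith

lemma derivE (N : ℕ) (x : ℝ) :
    HasDerivAt (fun x => ∑ m ∈ Finset.range N, eC m * Real.sin x ^ (2 * m + 1) * Real.cos x - 2 * x)
      (- (eC N * (2 * N + 1) * Real.sin x ^ (2 * N))) x := by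
  induction N with
  | zero =>
    have := ((hasDerivAt_id x).const_mul 2).const_sub 0
    simp only [Finset.range_zero, Finset.sum_empty]
    refine HasDerivAt.congr_deriv (f' := -(2 * 1)) this ?_
    norm_num [eC]
  | succ k ih =>
    have h := ih.add ((((Real.hasDerivAt_sin x).pow (2 * k + 1)).const_mul (eC k)).mul
      (Real.hasDerivAt_cos x))
    refine HasDerivAt.congr_deriv (h.congr_of_eventuallyEq (Filter.Eventually.of_forall fun y => ?_)) ?_
    · simp only [Finset.sum_range_succ, Pi.add_apply, Pi.mul_apply, Pi.pow_apply]
      ring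
    · have := eC_succ k
      have hc : Real.cos x ^ 2 = 1 - Real.sin x ^ 2 := by linarith [Real.sin_sq_add_cos_sq x]
      simp only [Nat.add_sub_cancel, Pi.pow_apply]
      push_cast
      linear_combination (Real.sin x ^ (2 * k + 2)) * this + (eC k * (2 * k + 1) * Real.sin x ^ (2 * k)) * hc

lemma derivB (N : ℕ) (x : ℝ) :
    HasDerivAt (fun x => ∑ m ∈ Finset.range (N + 1), bC m * Real.sin x ^ (2 * m) * Real.cos x)
      (- (bC N * (2 * N + 1) * Real.sin x ^ (2 * N + 1))) x := by
  induction N with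
  | zero =>
    simpa [bC] using Real.hasDerivAt_cos x
  | succ k ih =>
    have h := ih.add ((((Real.hasDerivAt_sin x).pow (2 * (k + 1))).const_mul (bC (k + 1))).mul
      (Real.hasDerivAt_cos x))
    refine HasDerivAt.congr_deriv (h.congr_of_eventuallyEq (Filter.Eventually.of_forall fun y => ?_)) ?_
    · dsimp only
      rw [Finset.sum_range_succ]
      simp
    · have := bC_succ k
      have hc : Real.cos x ^ 2 = 1 - Real.sin x ^ 2 := by linarith [Real.sin_sq_add_cos_sq x]
      have e : 2 * (k + 1) - 1 = 2 * k + 1 := by omega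
      simp only [e, Pi.pow_apply]
      push_cast
      linear_combination (Real.sin x ^ (2 * k + 1)) * this + (bC (k+1) * (2 * k + 2) * Real.sin x ^ (2 * k + 1)) * hc

lemma sin_bd (φ x : ℝ) (h1 : φ < Real.pi / 2) (hx : x ∈ Set.Icc 0 φ) :
    0 ≤ Real.sin x ∧ Real.sin x ≤ Real.sin φ :=
  ⟨Real.sin_nonneg_of_nonneg_of_le_pi hx.1 (by linarith [hx.2, Real.pi_pos]),
    Real.sin_le_sin_of_le_of_le_pi_div_two (by linarith [hx.1, Real.pi_pos]) h1.le hx.2⟩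

open MeasureTheory Filter Topology in
lemma hasSumE (φ : ℝ) (h0 : 0 < φ) (h1 : φ < Real.pi / 2) :
    HasSum (fun m => eC m * Real.sin φ ^ (2 * m + 1) * Real.cos φ) (2 * φ) := by
  have hs0 : 0 < Real.sin φ := Real.sin_pos_of_pos_of_lt_pi h0 (by linarith [Real.pi_pos])
  have hc0 : 0 < Real.cos φ := Real.cos_pos_of_mem_Ioo ⟨by linarith, h1⟩
  rw [hasSum_iff_tendsto_nat_of_nonneg
    (fun m => by have := eC_pos m; positivity), tendsto_iff_norm_sub_tendsto_zero]
  refine squeeze_zero (fun _ => norm_nonneg _) (fun N => ?_) (aux_tendsto φ h0 h1 2)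
  have key := (convex_Icc 0 φ).norm_image_sub_le_of_norm_hasDerivWithin_le
    (C := 2 * ((2 * N + 2) * Real.sin φ ^ (2 * N)))
    (fun x _ => (derivE N x).hasDerivWithinAt) (fun x hx => ?_)
    (Set.left_mem_Icc.2 h0.le) (Set.right_mem_Icc.2 h0.le)
  · simpa [abs_of_pos h0] using key
  · obtain ⟨a, b⟩ := sin_bd φ x h1 hx
    have e1 := eC_pos N
    rw [norm_neg, Real.norm_of_nonneg (by positivity)]
    have := pow_le_pow_left₀ a b (2 * N)
    calc eC N * (2 * N + 1) * Real.sin x ^ (2 * N)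
        ≤ 2 * (2 * N + 2) * Real.sin φ ^ (2 * N) := by
          have := eC_le N
          gcongr
          norm_num
      _ = _ := by ring

open MeasureTheory Filter Topology in
lemma hasSumB (φ : ℝ) (h0 : 0 < φ) (h1 : φ < Real.pi / 2) :
    HasSum (fun m => bC m * Real.sin φ ^ (2 * m) * Real.cos φ) 1 := by
  have hs0 : 0 < Real.sin φ := Real.sin_pos_of_pos_of_lt_pi h0 (by linarith [Real.pi_pos])
  have hc0 : 0 < Real.cos φ := Real.cos_pos_of_mem_Ioo ⟨by linarith, h1⟩
  rw [hasSum_iff_tendsto_nat_of_nonneg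
    (fun m => by have := bC_pos m; positivity), ← tendsto_add_atTop_iff_nat 1,
    tendsto_iff_norm_sub_tendsto_zero]
  refine squeeze_zero (fun _ => norm_nonneg _) (fun N => ?_) (aux_tendsto φ h0 h1 1)
  have key := (convex_Icc 0 φ).norm_image_sub_le_of_norm_hasDerivWithin_le
    (C := 1 * ((2 * N + 2) * Real.sin φ ^ (2 * N)))
    (fun x _ => (derivB N x).hasDerivWithinAt) (fun x hx => ?_)
    (Set.left_mem_Icc.2 h0.le) (Set.right_mem_Icc.2 h0.le)
  · have z : ∑ m ∈ Finset.range (N + 1), bC m * Real.sin 0 ^ (2 * m) * Real.cos 0 = 1 := by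
      rw [Finset.sum_range_succ']
      simp [bC]
    rw [z] at key
    simpa [abs_of_pos h0] using key
  · obtain ⟨a, b⟩ := sin_bd φ x h1 hx
    have e1 := bC_pos N
    rw [norm_neg, Real.norm_of_nonneg (by positivity)]
    have h2 := pow_le_pow_left₀ a b (2 * N)
    have h3 : Real.sin x ^ (2 * N + 1) ≤ Real.sin φ ^ (2 * N) := by
      rw [pow_succ]
      exact (mul_le_of_le_one_right (by positivity) (Real.sin_le_one x)).trans h2
    calc bC N * (2 * N + 1) * Real.sin x ^ (2 * N + 1)
        ≤ 1 * (2 * N + 2) * Real.sin φ ^ (2 * N) := by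
          have := bC_le N
          gcongr
          norm_num
      _ = _ := by ring

noncomputable def UU (σ θ : ℝ) : ℝ := -2 * Real.log (Real.sin (θ / 2) / Real.sin (σ / 2))

lemma sinpos {σ θ : ℝ} (hσπ : σ < Real.pi) (h : θ ∈ Set.Ioo 0 σ) : 0 < Real.sin (θ / 2) :=
  Real.sin_pos_of_pos_of_lt_pi (by linarith [h.1]) (by linarith [h.2, h.1])

lemma cospos {σ θ : ℝ} (hσπ : σ < Real.pi) (h : θ ∈ Set.Ioo 0 σ) : 0 < Real.cos (θ / 2) :=
  Real.cos_pos_of_mem_Ioo ⟨by linarith [h.1, Real.pi_pos], by linarith [h.2, h.1]⟩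

lemma UU_deriv {σ θ : ℝ} (hσ0 : 0 < σ) (hσπ : σ < Real.pi) (h : θ ∈ Set.Ioo 0 σ) :
    HasDerivAt (UU σ) (-(Real.cos (θ / 2) / Real.sin (θ / 2))) θ := by
  have hz : 0 < Real.sin (σ / 2) := Real.sin_pos_of_pos_of_lt_pi (by linarith) (by linarith)
  have hs := sinpos hσπ h
  have d : HasDerivAt (fun θ : ℝ => Real.sin (θ / 2)) (Real.cos (θ / 2) * (1 / 2)) θ :=
    ((hasDerivAt_id θ).div_const 2).sin
  have := ((d.div_const (Real.sin (σ / 2))).log (by positivity)).const_mul (-2)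
  refine HasDerivAt.congr_deriv this ?_
  field_simp

lemma UU_exp {σ θ : ℝ} (hσ0 : 0 < σ) (hσπ : σ < Real.pi) (h : θ ∈ Set.Ioo 0 σ) :
    Real.sin (θ / 2) = Real.sin (σ / 2) * Real.exp (-(UU σ θ / 2)) := by
  have hz : 0 < Real.sin (σ / 2) := Real.sin_pos_of_pos_of_lt_pi (by linarith) (by linarith)
  have hs := sinpos hσπ h
  have : -(UU σ θ / 2) = Real.log (Real.sin (θ / 2) / Real.sin (σ / 2)) := by unfold UU; ring
  rw [this, Real.exp_log (by positivity)]
  field_simp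

lemma UU_inj {σ : ℝ} (hσ0 : 0 < σ) (hσπ : σ < Real.pi) : Set.InjOn (UU σ) (Set.Ioo 0 σ) := by
  intro a ha b hb hab
  have h1 := UU_exp hσ0 hσπ ha
  rw [hab, ← UU_exp hσ0 hσπ hb] at h1
  have := Real.injOn_sin (x₁ := a / 2) (x₂ := b / 2) ⟨by linarith [ha.1, Real.pi_pos], by linarith [ha.2]⟩
    ⟨by linarith [hb.1, Real.pi_pos], by linarith [hb.2]⟩ h1
  linarith

lemma UU_pos {σ θ : ℝ} (hσ0 : 0 < σ) (hσπ : σ < Real.pi) (h : θ ∈ Set.Ioo 0 σ) : 0 < UU σ θ := by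
  have hz : 0 < Real.sin (σ / 2) := Real.sin_pos_of_pos_of_lt_pi (by linarith) (by linarith)
  have hs := sinpos hσπ h
  have hlt : Real.sin (θ / 2) < Real.sin (σ / 2) :=
    Real.sin_lt_sin_of_lt_of_le_pi_div_two (by linarith [h.1, Real.pi_pos]) (by linarith)
      (by linarith [h.2])
  have := Real.log_neg (x := Real.sin (θ / 2) / Real.sin (σ / 2)) (by positivity)
    ((div_lt_one hz).2 hlt)
  unfold UU; linarith

lemma UU_image {σ : ℝ} (hσ0 : 0 < σ) (hσπ : σ < Real.pi) : UU σ '' Set.Ioo 0 σ = Set.Ioi 0 := by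
  have hz : 0 < Real.sin (σ / 2) := Real.sin_pos_of_pos_of_lt_pi (by linarith) (by linarith)
  ext u
  constructor
  · rintro ⟨θ, h, rfl⟩
    exact UU_pos hσ0 hσπ h
  · intro hu
    have hu : 0 < u := hu
    set y := Real.sin (σ / 2) * Real.exp (-(u / 2)) with hy
    have hy0 : 0 < y := by positivity
    have he : Real.exp (-(u / 2)) < 1 := by rw [Real.exp_lt_one_iff]; linarith
    have hyz : y < Real.sin (σ / 2) := mul_lt_of_lt_one_right hz he
    have hz1 := Real.sin_le_one (σ / 2)
    have hA : Real.arcsin y < σ / 2 := by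
      rw [Real.arcsin_lt_iff_lt_sin' ⟨by linarith [Real.pi_pos], by linarith⟩]
      exact hyz
    refine ⟨2 * Real.arcsin y, ⟨by have := Real.arcsin_pos.2 hy0; linarith, by linarith⟩, ?_⟩
    have : 2 * Real.arcsin y / 2 = Real.arcsin y := by ring
    unfold UU
    rw [this, Real.sin_arcsin (by linarith) (by linarith), hy, mul_div_cancel_left₀ _ hz.ne',
      Real.log_exp]
    ring

open MeasureTheory in
lemma KK {σ s : ℝ} (hσ0 : 0 < σ) (hσπ : σ < Real.pi) (hs : 1 < s) (q : ℕ) :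
    IntegrableOn (fun θ => Real.sin (θ / 2) ^ q * Real.cos (θ / 2) * UU σ θ ^ (s - 2)) (Set.Ioo 0 σ) ∧
    ∫ θ in Set.Ioo 0 σ, Real.sin (θ / 2) ^ q * Real.cos (θ / 2) * UU σ θ ^ (s - 2) =
      Real.sin (σ / 2) ^ (q + 1) * ((1 / (((q : ℝ) + 1) / 2)) ^ (s - 1) * Real.Gamma (s - 1)) := by
  have hz : 0 < Real.sin (σ / 2) := Real.sin_pos_of_pos_of_lt_pi (by linarith) (by linarith)
  set g : ℝ → ℝ := fun u => Real.sin (σ / 2) ^ (q + 1) *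
    (u ^ (s - 1 - 1) * Real.exp (-((((q : ℝ) + 1) / 2) * u))) with hg
  have hG := Real.Gamma_pos_of_pos (s := s - 1) (by linarith)
  have hI : ∫ u in Set.Ioi 0, g u =
      Real.sin (σ / 2) ^ (q + 1) * ((1 / (((q : ℝ) + 1) / 2)) ^ (s - 1) * Real.Gamma (s - 1)) := by
    rw [hg, integral_const_mul, Real.integral_rpow_mul_exp_neg_mul_Ioi (by linarith) (by positivity)]
  have hint : IntegrableOn g (Set.Ioi 0) := by
    by_contra hn
    rw [integral_undef hn] at hI
    have : 0 < Real.sin (σ / 2) ^ (q + 1) * ((1 / (((q : ℝ) + 1) / 2)) ^ (s - 1) * Real.Gamma (s - 1)) := by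
      positivity
    linarith
  have hd : ∀ θ ∈ Set.Ioo 0 σ, HasDerivWithinAt (UU σ) (-(Real.cos (θ / 2) / Real.sin (θ / 2)))
      (Set.Ioo 0 σ) θ := fun θ h => (UU_deriv hσ0 hσπ h).hasDerivWithinAt
  have heq : ∀ θ ∈ Set.Ioo 0 σ, |-(Real.cos (θ / 2) / Real.sin (θ / 2))| • g (UU σ θ) =
      Real.sin (θ / 2) ^ q * Real.cos (θ / 2) * UU σ θ ^ (s - 2) := by
    intro θ h
    have h1 := sinpos hσπ h
    have h2 := cospos hσπ h
    have h3 : Real.sin (σ / 2) ^ (q + 1) * Real.exp (-((((q : ℝ) + 1) / 2) * UU σ θ)) =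
        Real.sin (θ / 2) ^ (q + 1) := by
      rw [UU_exp hσ0 hσπ h, mul_pow, ← Real.exp_nat_mul]
      congr 2
      push_cast; ring
    have h4 : g (UU σ θ) = Real.sin (θ / 2) ^ (q + 1) * UU σ θ ^ (s - 2) := by
      rw [← h3, hg]
      have : s - 1 - 1 = s - 2 := by ring
      simp only [this]; ring
    rw [abs_neg, abs_of_pos (by positivity), h4, smul_eq_mul, pow_succ]
    field_simp
  constructor
  · have := (integrableOn_image_iff_integrableOn_abs_deriv_smul measurableSet_Ioo hd
      (UU_inj hσ0 hσπ) g).1 (by rw [UU_image hσ0 hσπ]; exact hint)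
    exact this.congr_fun heq measurableSet_Ioo
  · rw [← hI, ← UU_image hσ0 hσπ, integral_image_eq_integral_abs_deriv_smul measurableSet_Ioo hd
      (UU_inj hσ0 hσπ) g]
    exact (setIntegral_congr_fun measurableSet_Ioo heq).symm

lemma halfBinom_pos (m : ℕ) : 0 < halfBinom m := by
  unfold halfBinom
  have := Real.Gamma_pos_of_pos (s := 2 * (m : ℝ) + 2) (by positivity)
  have := Real.Gamma_pos_of_pos (s := (m : ℝ) + 3 / 2) (by positivity)
  positivity

lemma halfBinom_succ (m : ℕ) : halfBinom (m + 1) * ((m : ℝ) + 3 / 2) ^ 2 =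
    (2 * m + 3) * (2 * m + 2) * halfBinom m := by
  unfold halfBinom
  have h1 := Real.Gamma_pos_of_pos (s := (m : ℝ) + 3 / 2) (by positivity)
  have e1 : 2 * ((m + 1 : ℕ) : ℝ) + 2 = (2 * m + 2 + 1) + 1 := by push_cast; ring
  have e2 : ((m + 1 : ℕ) : ℝ) + 3 / 2 = (m + 3 / 2) + 1 := by push_cast; ring
  rw [e1, e2, Real.Gamma_add_one (by positivity), Real.Gamma_add_one (by positivity),
    Real.Gamma_add_one (by positivity)]
  field_simp
  ring

lemma halfBinom_bC (m : ℕ) : halfBinom m * bC m * Real.pi * ((m : ℝ) + 1 / 2) = 2 ^ (2 * m + 1) := by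
  induction m with
  | zero =>
    have : Real.Gamma (3 / 2) = Real.sqrt Real.pi / 2 := by
      have := Real.Gamma_add_one (s := 1 / 2) (by norm_num)
      rw [Real.Gamma_one_half_eq] at this
      norm_num at this ⊢
      linarith
    simp only [halfBinom, bC]
    norm_num [this, div_pow, Real.sq_sqrt Real.pi_pos.le]
  | succ k ih =>
    have h1 := halfBinom_succ k
    have h2 := bC_succ k
    have hk : (0 : ℝ) < (k : ℝ) + 3 / 2 := by positivity
    have hk2 : (0 : ℝ) < (2 * k : ℝ) + 2 := by positivity
    have e : (2 : ℝ) ^ (2 * (k + 1) + 1) = 4 * 2 ^ (2 * k + 1) := by ring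
    rw [e, ← ih]
    have a1 : halfBinom (k + 1) = (2 * k + 3) * (2 * k + 2) * halfBinom k / ((k : ℝ) + 3 / 2) ^ 2 := by
      rw [← h1]; field_simp
    have a2 : bC (k + 1) = bC k * (2 * k + 1) / (2 * k + 2) := by
      rw [← h2]; field_simp
    rw [a1, a2]
    push_cast
    field_simp
    ring

open MeasureTheory in
open Real in
theorem shifted_log_sine_eq_zetaCB_sub_etaCB (σ s : ℝ) (hσ0 : 0 < σ) (hσπ : σ < π)
    (hs : 1 < s) :
    (1 / Real.Gamma (s - 1)) *
        ∫ θ in (0 : ℝ)..σ,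
          (θ - σ) * (-2 * Real.log (Real.sin (θ / 2) / Real.sin (σ / 2))) ^ (s - 2) =
      (∑' m : ℕ, (2 * Real.sin (σ / 2)) ^ (2 * (m + 1)) /
          ((Nat.choose (2 * (m + 1)) (m + 1) : ℝ) * ((m : ℝ) + 1) ^ s)) -
        σ / π * ∑' m : ℕ, (2 * Real.sin (σ / 2)) ^ (2 * m + 1) /
          (halfBinom m * ((m : ℝ) + 1 / 2) ^ s) := by
  have hz : 0 < Real.sin (σ / 2) := Real.sin_pos_of_pos_of_lt_pi (by linarith) (by linarith)
  have hcσ : 0 < Real.cos (σ / 2) := Real.cos_pos_of_mem_Ioo ⟨by linarith, by linarith⟩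
  have hG := Real.Gamma_pos_of_pos (s := s - 1) (by linarith)
  set z := Real.sin (σ / 2) with hzdef
  set TA : ℕ → ℝ := fun m => (2 * z) ^ (2 * (m + 1)) /
          ((Nat.choose (2 * (m + 1)) (m + 1) : ℝ) * ((m : ℝ) + 1) ^ s) with hTA
  set TB : ℕ → ℝ := fun m => (2 * z) ^ (2 * m + 1) /
          (halfBinom m * ((m : ℝ) + 1 / 2) ^ s) with hTB
  set FA : ℕ → ℝ → ℝ := fun m θ => eC m *
    (Real.sin (θ / 2) ^ (2 * m + 1) * Real.cos (θ / 2) * UU σ θ ^ (s - 2)) with hFA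
  set FB : ℕ → ℝ → ℝ := fun m θ => σ * bC m *
    (Real.sin (θ / 2) ^ (2 * m) * Real.cos (θ / 2) * UU σ θ ^ (s - 2)) with hFB
  have iA : ∀ m, IntegrableOn (FA m) (Set.Ioo 0 σ) := fun m =>
    (KK hσ0 hσπ hs (2 * m + 1)).1.const_mul _
  have iB : ∀ m, IntegrableOn (FB m) (Set.Ioo 0 σ) := fun m =>
    (KK hσ0 hσπ hs (2 * m)).1.const_mul _
  have vA' : ∀ m : ℕ, ∫ θ in Set.Ioo 0 σ, FA m θ =
      Real.Gamma (s - 1) * (eC m * z ^ (2 * m + 2) / ((m : ℝ) + 1) ^ (s - 1)) := by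
    intro m
    rw [hFA]
    simp only
    rw [integral_const_mul, (KK hσ0 hσπ hs (2 * m + 1)).2]
    have e : (((2 * m + 1 : ℕ) : ℝ) + 1) / 2 = (m : ℝ) + 1 := by push_cast; ring
    rw [e, Real.div_rpow zero_le_one (by positivity), Real.one_rpow]
    ring
  have vB' : ∀ m : ℕ, ∫ θ in Set.Ioo 0 σ, FB m θ =
      Real.Gamma (s - 1) * (σ * (bC m * z ^ (2 * m + 1) / ((m : ℝ) + 1 / 2) ^ (s - 1))) := by
    intro m
    rw [hFB]
    simp only
    rw [integral_const_mul, (KK hσ0 hσπ hs (2 * m)).2]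
    have e : (((2 * m : ℕ) : ℝ) + 1) / 2 = (m : ℝ) + 1 / 2 := by push_cast; ring
    rw [e, Real.div_rpow zero_le_one (by positivity), Real.one_rpow]
    ring
  have tA : ∀ m, eC m * z ^ (2 * m + 2) / ((m : ℝ) + 1) ^ (s - 1) = TA m := by
    intro m
    have hc : (0 : ℝ) < (Nat.choose (2 * (m + 1)) (m + 1) : ℝ) := cb_pos (m + 1)
    have hm : (0 : ℝ) < (m : ℝ) + 1 := by positivity
    have hr : ((m : ℝ) + 1) ^ s = ((m : ℝ) + 1) ^ (s - 1) * ((m : ℝ) + 1) := by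
      rw [← Real.rpow_add_one hm.ne']; congr 1; ring
    have hp := Real.rpow_pos_of_pos hm (s - 1)
    have e4 : (2 * z) ^ (2 * (m + 1)) = 4 ^ (m + 1) * z ^ (2 * m + 2) := by
      rw [mul_pow, pow_mul]; norm_num; ring
    simp only [hTA, eC]
    rw [hr, e4]
    field_simp
  have tB : ∀ m, bC m * z ^ (2 * m + 1) / ((m : ℝ) + 1 / 2) ^ (s - 1) = 1 / π * TB m := by
    intro m
    have hc := halfBinom_pos m
    have hm : (0 : ℝ) < (m : ℝ) + 1 / 2 := by positivity
    have hr : ((m : ℝ) + 1 / 2) ^ s = ((m : ℝ) + 1 / 2) ^ (s - 1) * ((m : ℝ) + 1 / 2) := by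
      rw [← Real.rpow_add_one hm.ne']; congr 1; ring
    have hp := Real.rpow_pos_of_pos hm (s - 1)
    simp only [hTB]
    rw [hr, mul_pow, ← halfBinom_bC m]
    generalize ((m : ℝ) + 1 / 2) ^ (s - 1) = X at *
    generalize ((m : ℝ) + 1 / 2) = Y at *
    field_simp
  have vA : ∀ m : ℕ, ∫ θ in Set.Ioo 0 σ, FA m θ = Real.Gamma (s - 1) * TA m := by
    intro m; rw [vA', tA]
  have vB : ∀ m : ℕ, ∫ θ in Set.Ioo 0 σ, FB m θ = Real.Gamma (s - 1) * (σ / π * TB m) := by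
    intro m; rw [vB', tB]; ring
  have sA : Summable TA := by
    have h := (hasSumE (σ / 2) (by linarith) (by linarith)).summable.mul_right (z / Real.cos (σ / 2))
    refine Summable.of_nonneg_of_le (fun m => ?_) (fun m => ?_) h
    · simp only [hTA]; positivity
    · rw [← tA]
      have he := eC_pos m
      have h1 : 1 ≤ ((m : ℝ) + 1) ^ (s - 1) :=
        Real.one_le_rpow (by linarith [(m.cast_nonneg : (0 : ℝ) ≤ m)]) (by linarith)
      calc eC m * z ^ (2 * m + 2) / ((m : ℝ) + 1) ^ (s - 1) ≤ eC m * z ^ (2 * m + 2) :=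
            div_le_self (by positivity) h1
        _ = _ := by rw [← hzdef]; field_simp; ring
  have sB : Summable TB := by
    have h := (hasSumB (σ / 2) (by linarith) (by linarith)).summable.mul_right
      (z / Real.cos (σ / 2) * π / (1 / 2 : ℝ) ^ (s - 1))
    refine Summable.of_nonneg_of_le (fun m => ?_) (fun m => ?_) h
    · have := halfBinom_pos m
      simp only [hTB]; positivity
    · have e : TB m = π * (bC m * z ^ (2 * m + 1) / ((m : ℝ) + 1 / 2) ^ (s - 1)) := by
        rw [tB]; field_simp
      rw [e]
      have he := bC_pos m
      have h1 : (1 / 2 : ℝ) ^ (s - 1) ≤ ((m : ℝ) + 1 / 2) ^ (s - 1) :=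
        Real.rpow_le_rpow (by norm_num) (by linarith [(m.cast_nonneg : (0 : ℝ) ≤ m)]) (by linarith)
      have h2 : (0 : ℝ) < (1 / 2 : ℝ) ^ (s - 1) := by positivity
      calc π * (bC m * z ^ (2 * m + 1) / ((m : ℝ) + 1 / 2) ^ (s - 1))
            ≤ π * (bC m * z ^ (2 * m + 1) / (1 / 2 : ℝ) ^ (s - 1)) := by gcongr
        _ = _ := by rw [← hzdef, pow_succ]; field_simp
  have nA : ∀ m, ∀ θ ∈ Set.Ioo 0 σ, 0 ≤ FA m θ := by
    intro m θ h
    have := eC_pos m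
    have := sinpos hσπ h
    have := cospos hσπ h
    have := UU_pos hσ0 hσπ h
    simp only [hFA]; positivity
  have nB : ∀ m, ∀ θ ∈ Set.Ioo 0 σ, 0 ≤ FB m θ := by
    intro m θ h
    have := bC_pos m
    have := sinpos hσπ h
    have := cospos hσπ h
    have := UU_pos hσ0 hσπ h
    simp only [hFB]; positivity
  have hsum : HasSum (fun m => ∫ θ in Set.Ioo 0 σ, (FA m θ - FB m θ))
      (∫ θ in Set.Ioo 0 σ, ∑' m, (FA m θ - FB m θ)) := by
    refine hasSum_integral_of_summable_integral_norm (fun m => (iA m).sub (iB m)) ?_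
    refine Summable.of_nonneg_of_le (fun m => integral_nonneg (fun _ => norm_nonneg _)) (fun m => ?_)
      ((sA.mul_left (Real.Gamma (s - 1))).add ((sB.mul_left (σ / π)).mul_left (Real.Gamma (s - 1))))
    rw [← vA, ← vB, ← integral_add (iA m) (iB m)]
    refine setIntegral_mono_on ((iA m).sub (iB m)).norm ((iA m).add (iB m)) measurableSet_Ioo ?_
    intro θ h
    have h1 := nA m θ h
    have h2 := nB m θ h
    refine (norm_sub_le _ _).trans ?_
    rw [Real.norm_of_nonneg h1, Real.norm_of_nonneg h2]
  have hval : ∫ θ in Set.Ioo 0 σ, ∑' m, (FA m θ - FB m θ) =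
      ∫ θ in (0 : ℝ)..σ, (θ - σ) * (-2 * Real.log (Real.sin (θ / 2) / z)) ^ (s - 2) := by
    rw [intervalIntegral.integral_of_le hσ0.le, integral_Ioc_eq_integral_Ioo]
    refine setIntegral_congr_fun measurableSet_Ioo (fun θ h => ?_)
    have hE := (hasSumE (θ / 2) (by linarith [h.1]) (by linarith [h.2])).mul_right (UU σ θ ^ (s - 2))
    have hB := ((hasSumB (θ / 2) (by linarith [h.1]) (by linarith [h.2])).mul_left σ).mul_right
      (UU σ θ ^ (s - 2))
    have := (hE.sub hB).tsum_eq
    have e : (2 * (θ / 2) * UU σ θ ^ (s - 2) - σ * 1 * UU σ θ ^ (s - 2)) =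
      (θ - σ) * (-2 * Real.log (Real.sin (θ / 2) / z)) ^ (s - 2) := by
      unfold UU; ring
    rw [← e, ← this]
    refine tsum_congr (fun m => ?_)
    simp only [hFA, hFB]; ring
  rw [← hval, ← hsum.tsum_eq]
  have : ∀ m, ∫ θ in Set.Ioo 0 σ, (FA m θ - FB m θ) = Real.Gamma (s - 1) * (TA m - σ / π * TB m) := by
    intro m
    rw [integral_sub (iA m) (iB m), vA, vB]; ring
  simp only [this]
  rw [tsum_mul_left, (sA.tsum_sub (sB.mul_left _)), tsum_mul_left]
  field_simp
end

section
/- Define SLs(−n; σ) for integer n ≥ −1 and 0 < σ < π via the analytic continuation SLs(s;σ) := ζ_CB(s; sin(σ/2)) − (σ/π)η_CB(s; sin(σ/2)) (series converging for all s). Then SLs(−n; σ) = x·p_n(x)/(2^n(1−x)^{n+1}) where x = sin²(σ/2) and p_n is Lehmer's polynomial. -/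
open Polynomial

noncomputable def serF (c : ℕ → ℝ) (j k : ℕ) (y : ℝ) : ℝ :=
  ∑' m : ℕ, c m * ((2 * (m:ℝ) + j + 1) / 2) ^ k * y ^ (2 * m + j + 1)
noncomputable def serG (c : ℕ → ℝ) (j k : ℕ) (y : ℝ) : ℝ :=
  ∑' m : ℕ, c m * ((2 * (m:ℝ) + j + 1) / 2) ^ k * ((2 * (m:ℝ) + j + 1) * y ^ (2 * m + j))

lemma ser_bound (j k : ℕ) (r : ℝ) (h0 : 0 < r) (h1 : r < 1) :
    Summable (fun m : ℕ => 2 * ((2 * (m:ℝ) + j + 1) / 2) ^ k *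
      ((2 * (m:ℝ) + j + 1) * r ^ (2 * m + j))) := by
  have h := summable_pow_mul_geometric_of_norm_lt_one (R := ℝ) (k+1) (r := r)
    (by rw [Real.norm_eq_abs, abs_of_pos h0]; exact h1)
  have hi : Function.Injective (fun m : ℕ => 2 * m + j + 1) := by
    intro a b hab; simp only at hab; omega
  have h2 := (h.comp_injective hi).mul_left (2 / 2 ^ k / r)
  refine h2.congr ?_
  intro m
  simp only [Function.comp]
  push_cast
  rw [div_pow, pow_succ r (2*m+j)]
  field_simp
  ring

lemma ser_summable {c : ℕ → ℝ} (hc : ∀ m, |c m| ≤ 2) (j k : ℕ) {y : ℝ} (hy : |y| < 1) :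
    Summable (fun m : ℕ => c m * ((2 * (m:ℝ) + j + 1) / 2) ^ k *
      ((2 * (m:ℝ) + j + 1) * y ^ (2 * m + j))) := by
  obtain ⟨r, hr, hr1⟩ := exists_between hy
  have h0 : 0 < r := lt_of_le_of_lt (abs_nonneg _) hr
  refine Summable.of_norm_bounded (ser_bound j k r h0 hr1) ?_
  intro m
  have e : (0:ℝ) ≤ 2 * (m:ℝ) + j + 1 := by positivity
  rw [Real.norm_eq_abs, abs_mul, abs_mul, abs_mul, abs_pow y, abs_of_nonneg e,
    abs_of_nonneg (by positivity : (0:ℝ) ≤ ((2 * (m:ℝ) + j + 1) / 2) ^ k)]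
  gcongr
  exact hc m

lemma ser_summableF {c : ℕ → ℝ} (hc : ∀ m, |c m| ≤ 2) (j k : ℕ) {y : ℝ} (hy : |y| < 1) :
    Summable (fun m : ℕ => c m * ((2 * (m:ℝ) + j + 1) / 2) ^ k * y ^ (2 * m + j + 1)) := by
  obtain ⟨r, hr, hr1⟩ := exists_between hy
  have h0 : 0 < r := lt_of_le_of_lt (abs_nonneg _) hr
  refine Summable.of_norm_bounded (ser_bound j k r h0 hr1) ?_
  intro m
  have e : (0:ℝ) ≤ 2 * (m:ℝ) + j + 1 := by positivity
  rw [Real.norm_eq_abs, abs_mul, abs_mul, abs_pow y,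
    abs_of_nonneg (by positivity : (0:ℝ) ≤ ((2 * (m:ℝ) + j + 1) / 2) ^ k)]
  have : |y| ^ (2*m+j+1) ≤ (2 * (m:ℝ) + j + 1) * r ^ (2 * m + j) := by
    rw [pow_succ]
    have h1 : |y| ^ (2*m+j) ≤ r ^ (2*m+j) := by gcongr
    have h2 : |y| ^ (2*m+j) * |y| ≤ |y| ^ (2*m+j) := mul_le_of_le_one_right (by positivity) hy.le
    have h3 : r ^ (2*m+j) ≤ (2 * (m:ℝ) + j + 1) * r ^ (2 * m + j) :=
      le_mul_of_one_le_left (by positivity) (by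
        have : (0:ℝ) ≤ 2 * (m:ℝ) + j := by positivity
        linarith)
    linarith
  gcongr
  exact hc m

lemma serF_hasDerivAt {c : ℕ → ℝ} (hc : ∀ m, |c m| ≤ 2) (j k : ℕ) {y : ℝ} (hy : |y| < 1) :
    HasDerivAt (serF c j k) (serG c j k y) y := by
  obtain ⟨r, hr, hr1⟩ := exists_between hy
  have h0 : 0 < r := lt_of_le_of_lt (abs_nonneg _) hr
  refine hasDerivAt_tsum_of_isPreconnected (t := Set.Ioo (-r) r) (y₀ := 0)
    (ser_bound j k r h0 hr1) isOpen_Ioo isPreconnected_Ioo ?_ ?_ ?_ ?_ ?_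
    (g := fun m y => c m * ((2 * (m:ℝ) + j + 1) / 2) ^ k * y ^ (2 * m + j + 1))
    (g' := fun m y => c m * ((2 * (m:ℝ) + j + 1) / 2) ^ k * ((2 * (m:ℝ) + j + 1) * y ^ (2 * m + j)))
  · intro m y _
    have := (hasDerivAt_pow (2*m+j+1) y).const_mul (c m * ((2 * (m:ℝ) + j + 1) / 2) ^ k)
    refine this.congr_deriv ?_
    rw [Nat.add_sub_cancel]
    push_cast
    ring
  · intro m y hy
    have hy' : |y| ≤ r := abs_le.2 ⟨hy.1.le, hy.2.le⟩
    have e : (0:ℝ) ≤ 2 * (m:ℝ) + j + 1 := by positivity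
    rw [Real.norm_eq_abs, abs_mul, abs_mul, abs_mul, abs_pow y, abs_of_nonneg e,
      abs_of_nonneg (by positivity : (0:ℝ) ≤ ((2 * (m:ℝ) + j + 1) / 2) ^ k)]
    gcongr
    exact hc m
  · exact ⟨by linarith, h0⟩
  · exact ser_summableF hc j k (by simp)
  · exact abs_lt.1 hr

lemma serF_succ (c : ℕ → ℝ) (j k : ℕ) (y : ℝ) :
    serF c j (k+1) y = y / 2 * serG c j k y := by
  unfold serF serG
  rw [← tsum_mul_left]
  congr 1; ext m; ring

noncomputable def cA (m : ℕ) : ℝ := 4 ^ (m+1) / ((m+1) * (Nat.centralBinom (m+1) : ℝ))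
noncomputable def cB (m : ℕ) : ℝ := (Nat.centralBinom m : ℝ) / 4 ^ m

lemma cA_bound (m : ℕ) : |cA m| ≤ 2 := by
  unfold cA
  rw [abs_of_nonneg (by positivity)]
  have h := Nat.four_pow_le_two_mul_self_mul_centralBinom (m+1) (by omega)
  have h' : (4:ℝ)^(m+1) ≤ 2 * (m+1) * Nat.centralBinom (m+1) := by exact_mod_cast h
  have hp : (0:ℝ) < Nat.centralBinom (m+1) := by exact_mod_cast Nat.centralBinom_pos _
  rw [div_le_iff₀ (by positivity)]
  linarith

lemma cA_rec (m : ℕ) : cA (m+1) * (2*m+3) = cA m * (2*m+2) := by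
  unfold cA
  have h := Nat.succ_mul_centralBinom_succ (m+1)
  have h' : ((m:ℝ)+2) * Nat.centralBinom (m+2) = 2 * (2*(m+1)+1) * Nat.centralBinom (m+1) := by
    have : (((m+1+1) * Nat.centralBinom (m+1+1) : ℕ):ℝ) = ((2 * (2*(m+1)+1) * Nat.centralBinom (m+1) : ℕ) : ℝ) := by
      rw [h]
    push_cast at this
    rw [← this]; ring
  have hp : (0:ℝ) < Nat.centralBinom (m+1) := by exact_mod_cast Nat.centralBinom_pos _
  push_cast
  rw [show (m:ℝ)+1+1 = m+2 by ring, show m+1+1=m+2 by ring, h']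
  field_simp
  ring

lemma cB_rec (m : ℕ) : cB (m+1) * (2*m+2) = cB m * (2*m+1) := by
  unfold cB
  have h := Nat.succ_mul_centralBinom_succ m
  have h' : ((m:ℝ)+1) * Nat.centralBinom (m+1) = 2 * (2*m+1) * Nat.centralBinom m := by
    exact_mod_cast h
  have : (Nat.centralBinom (m+1):ℝ) = 2 * (2*m+1) * Nat.centralBinom m / (m+1) := by
    field_simp; linarith
  rw [this]
  field_simp
  ring

lemma cB_bound (m : ℕ) : |cB m| ≤ 2 := by
  have h0 : ∀ m, 0 ≤ cB m := fun m => by unfold cB; positivity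
  rw [abs_of_nonneg (h0 m)]
  have : cB m ≤ 1 := by
    induction m with
    | zero => simp [cB]
    | succ m ih =>
      have h := cB_rec m
      have := h0 m
      have h1 := h0 (m+1)
      have hm : (0:ℝ) ≤ m := by positivity
      by_contra hh
      push Not at hh
      nlinarith
  linarith

-- ODEs
lemma odeA {y : ℝ} (hy : |y| < 1) :
    (1 - y^2) * (y * serG cA 1 0 y) = serF cA 1 0 y + 2 * y^2 := by
  have s1 := ser_summable cA_bound 1 0 hy
  have s2 := ser_summableF cA_bound 1 0 hy
  have e : y * serG cA 1 0 y - serF cA 1 0 y = 2 * y ^2 + y^2 * (y * serG cA 1 0 y) := by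
    unfold serG serF
    rw [← tsum_mul_left, ← (s1.mul_left y).tsum_sub s2, ((s1.mul_left y).sub s2).tsum_eq_zero_add,
      ← tsum_mul_left]
    congr 1
    · simp [cA, Nat.centralBinom]; ring
    · congr 1; ext m
      have := cA_rec m
      push_cast
      linear_combination y^(2*m+4) * this
  linarith

lemma odeB {y : ℝ} (hy : |y| < 1) :
    (1 - y^2) * (y * serG cB 0 0 y) = serF cB 0 0 y := by
  have s1 := ser_summable cB_bound 0 0 hy
  have s2 := ser_summableF cB_bound 0 0 hy
  have e : y * serG cB 0 0 y - serF cB 0 0 y = y^2 * (y * serG cB 0 0 y) := by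
    unfold serG serF
    rw [← tsum_mul_left, ← (s1.mul_left y).tsum_sub s2, ((s1.mul_left y).sub s2).tsum_eq_zero_add,
      ← tsum_mul_left]
    simp only [CharP.cast_eq_zero, mul_zero, pow_zero]
    rw [show ∀ a b : ℝ, a = 0 → (a + b = b) from fun a b h => by rw [h, zero_add]]
    · congr 1; ext m
      have := cB_rec m
      push_cast
      linear_combination y^(2*m+3) * this
    · ring
  linarith

lemma ode_solve (F G : ℝ → ℝ) (a : ℝ) (hF : ∀ y, |y| < 1 → HasDerivAt F (G y) y)
    (hode : ∀ y, |y| < 1 → (1 - y^2) * (y * G y) = F y + a * y^2) (hF0 : F 0 = 0)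
    (θ : ℝ) (h0 : 0 < θ) (h1 : θ < Real.pi / 2) :
    F (Real.sin θ) = (G 0 + a * θ) * (Real.sin θ / Real.cos θ) := by
  have hs : ∀ t ∈ Set.Ioo (0:ℝ) (Real.pi/2), 0 < Real.sin t := fun t ht =>
    Real.sin_pos_of_pos_of_lt_pi ht.1 (by linarith [ht.2, Real.pi_pos])
  have hc : ∀ t ∈ Set.Ioo (0:ℝ) (Real.pi/2), 0 < Real.cos t := fun t ht =>
    Real.cos_pos_of_mem_Ioo ⟨by linarith [ht.1, Real.pi_pos], ht.2⟩
  have hl : ∀ t ∈ Set.Ioo (0:ℝ) (Real.pi/2), |Real.sin t| < 1 := fun t ht => by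
    have := Real.sin_sq_add_cos_sq t
    have := hc t ht
    rw [abs_lt]; constructor <;> nlinarith [hs t ht]
  set f : ℝ → ℝ := fun t => F (Real.sin t) * (Real.cos t / Real.sin t) - a * t with hf
  have hd : ∀ t ∈ Set.Ioo (0:ℝ) (Real.pi/2), HasDerivAt f 0 t := by
    intro t ht
    have hs' := (hs t ht).ne'
    have d1 : HasDerivAt (fun t => F (Real.sin t)) (G (Real.sin t) * Real.cos t) t :=
      (hF _ (hl t ht)).comp t (Real.hasDerivAt_sin t)
    have d2 := (Real.hasDerivAt_cos t).fun_div (Real.hasDerivAt_sin t) hs'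
    have d3 := (d1.fun_mul d2).fun_sub ((hasDerivAt_id t).const_mul a)
    refine d3.congr_deriv ?_
    have o := hode _ (hl t ht)
    have e := Real.sin_sq_add_cos_sq t
    field_simp
    have e2 : Real.cos t ^ 2 = 1 - Real.sin t ^ 2 := by linarith
    have : -Real.sin t ^2 - Real.cos t ^ 2 = -1 := by linarith
    linear_combination o + (G (Real.sin t) * Real.sin t - F (Real.sin t)) * e
  have hconst : ∀ t ∈ Set.Ioo (0:ℝ) (Real.pi/2), f t = f θ := fun t ht =>
    isOpen_Ioo.is_const_of_deriv_eq_zero isPreconnected_Ioo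
      (fun t ht => (hd t ht).differentiableAt.differentiableWithinAt)
      (fun t ht => (hd t ht).deriv) ht ⟨h0, h1⟩
  have hmem : Set.Ioo (0:ℝ) (Real.pi/2) ∈ nhdsWithin (0:ℝ) (Set.Ioi 0) :=
    Ioo_mem_nhdsGT (by linarith)
  have lim1 : Filter.Tendsto f (nhdsWithin 0 (Set.Ioi 0)) (nhds (f θ)) := by
    refine tendsto_const_nhds.congr' ?_
    filter_upwards [hmem] with t ht
    exact (hconst t ht).symm
  have lim2 : Filter.Tendsto f (nhdsWithin 0 (Set.Ioi 0)) (nhds (G 0 * 1 - a * 0)) := by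
    have s1 := hasDerivAt_iff_tendsto_slope.1 (hF 0 (by simp))
    have s2 : Filter.Tendsto Real.sin (nhdsWithin 0 (Set.Ioi 0)) (nhdsWithin 0 {0}ᶜ) := by
      refine tendsto_nhdsWithin_iff.2 ⟨?_, ?_⟩
      · have := (Real.continuous_sin.tendsto 0).mono_left
          (nhdsWithin_le_nhds (s := Set.Ioi (0:ℝ)))
        rwa [Real.sin_zero] at this
      · filter_upwards [hmem] with t ht
        exact (hs t ht).ne'
    have s3 := (Real.continuous_cos.tendsto 0).mono_left (nhdsWithin_le_nhds (s := Set.Ioi (0:ℝ)))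
    rw [Real.cos_zero] at s3
    have s4 : Filter.Tendsto (fun t : ℝ => a * t) (nhdsWithin 0 (Set.Ioi 0)) (nhds (a * 0)) :=
      ((continuous_const.mul continuous_id).tendsto 0).mono_left nhdsWithin_le_nhds
    refine (((s1.comp s2).mul s3).sub s4).congr ?_
    intro t
    simp only [Function.comp, slope_def_field, hF0, hf]
    ring
  have key := tendsto_nhds_unique lim1 lim2
  have a1 := (hs θ ⟨h0, h1⟩).ne'
  have a2 := (hc θ ⟨h0, h1⟩).ne'
  simp only [hf] at key
  have : F (Real.sin θ) * (Real.cos θ / Real.sin θ) = G 0 + a * θ := by linarith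
  rw [← this]
  field_simp

lemma abs_sin_lt {θ : ℝ} (h0 : 0 < θ) (h1 : θ < Real.pi / 2) : |Real.sin θ| < 1 := by
  have := Real.sin_sq_add_cos_sq θ
  have := Real.cos_pos_of_mem_Ioo ⟨by linarith [Real.pi_pos], h1⟩
  rw [abs_lt]; constructor <;> nlinarith

lemma baseA (θ : ℝ) (h0 : 0 < θ) (h1 : θ < Real.pi / 2) :
    serF cA 1 0 (Real.sin θ) = 2 * θ * (Real.sin θ / Real.cos θ) := by
  have := ode_solve (serF cA 1 0) (serG cA 1 0) 2 (fun y hy => serF_hasDerivAt cA_bound 1 0 hy)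
    (fun y hy => odeA hy) (by simp [serF]) θ h0 h1
  rw [this]
  simp [serG]

lemma baseB (θ : ℝ) (h0 : 0 < θ) (h1 : θ < Real.pi / 2) :
    serF cB 0 0 (Real.sin θ) = Real.sin θ / Real.cos θ := by
  have := ode_solve (serF cB 0 0) (serG cB 0 0) 0 (fun y hy => serF_hasDerivAt cB_bound 0 0 hy)
    (fun y hy => by rw [odeB hy]; ring) (by simp [serF]) θ h0 h1
  rw [this]
  have : serG cB 0 0 0 = 1 := by
    unfold serG
    rw [tsum_eq_single 0]
    · simp [cB]
    · intro m hm; simp [hm]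
  rw [this]; ring

lemma ser_step {c : ℕ → ℝ} (hc : ∀ m, |c m| ≤ 2) (j k : ℕ) (g : ℝ → ℝ) (g' θ : ℝ)
    (h0 : 0 < θ) (h1 : θ < Real.pi / 2)
    (heq : ∀ t, 0 < t → t < Real.pi / 2 → serF c j k (Real.sin t) = g t)
    (hg : HasDerivAt g g' θ) :
    serF c j (k+1) (Real.sin θ) = Real.sin θ / (2 * Real.cos θ) * g' := by
  have d1 : HasDerivAt (fun t => serF c j k (Real.sin t))
      (serG c j k (Real.sin θ) * Real.cos θ) θ :=
    (serF_hasDerivAt hc j k (abs_sin_lt h0 h1)).comp θ (Real.hasDerivAt_sin θ)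
  have d2 : HasDerivAt (fun t => serF c j k (Real.sin t)) g' θ := by
    refine hg.congr_of_eventuallyEq ?_
    filter_upwards [Ioo_mem_nhds h0 h1] with t ht using heq t ht.1 ht.2
  have hcos := Real.cos_pos_of_mem_Ioo (x := θ) ⟨by linarith [Real.pi_pos], h1⟩
  rw [serF_succ, ← d1.unique d2]
  field_simp

lemma hasDeriv_poly (p : Polynomial ℤ) (θ : ℝ) :
    HasDerivAt (fun t => aeval (Real.sin t ^ 2) p)
      (aeval (Real.sin θ ^ 2) (derivative p) * (2 * Real.sin θ * Real.cos θ)) θ := by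
  have h := (Polynomial.hasDerivAt_aeval p (Real.sin θ ^ 2)).comp θ
    ((Real.hasDerivAt_sin θ).fun_pow 2)
  refine h.congr_deriv ?_
  push_cast; ring

lemma closedB (k : ℕ) : ∀ θ : ℝ, 0 < θ → θ < Real.pi / 2 →
    serF cB 0 k (Real.sin θ) =
      Real.sin θ * aeval (Real.sin θ ^ 2) (lehmerQ k) / (2 ^ k * Real.cos θ ^ (2*k+1)) := by
  induction k with
  | zero => intro θ h0 h1; rw [baseB θ h0 h1]; simp [lehmerQ]
  | succ k ih =>
    intro θ h0 h1
    have hcos := Real.cos_pos_of_mem_Ioo (x := θ) ⟨by linarith [Real.pi_pos], h1⟩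
    have hsin := Real.sin_pos_of_pos_of_lt_pi h0 (by linarith)
    have hg := ((Real.hasDerivAt_sin θ).fun_mul (hasDeriv_poly (lehmerQ k) θ)).fun_div
      (((Real.hasDerivAt_cos θ).fun_pow (2*k+1)).const_mul (2^k)) (by positivity)
    rw [ser_step cB_bound 0 k _ _ θ h0 h1 ih hg]
    simp only [lehmerQ, map_add, map_mul, map_sub, map_one, aeval_X, aeval_C, map_ofNat,
      eq_intCast, map_natCast, Int.cast_mul, Int.cast_ofNat, Int.cast_natCast, add_tsub_cancel_right]
    have e : Real.sin θ ^ 2 = 1 - Real.cos θ ^ 2 := by linarith [Real.sin_sq_add_cos_sq θ]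
    generalize (aeval (Real.sin θ ^ 2)) (lehmerQ k) = q
    generalize (aeval (Real.sin θ ^ 2)) (derivative (lehmerQ k)) = q'
    generalize Real.sin θ = s at *
    generalize Real.cos θ = c at *
    rw [show 2 * (k+1) + 1 = 2*k + 3 by ring]
    rw [pow_add c (2*k) 3, pow_add c (2*k) 1]
    have : (0:ℝ) < c ^ (2*k) := by positivity
    generalize c ^ (2*k) = C at *
    push_cast
    field_simp
    simp only [e]
    ring

lemma closedA (k : ℕ) : ∀ θ : ℝ, 0 < θ → θ < Real.pi / 2 →
    serF cA 1 k (Real.sin θ) =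
      2 * (Real.sin θ ^ 2 * aeval (Real.sin θ ^ 2) (lehmerP k)) / (2 ^ k * Real.cos θ ^ (2*k)) +
      2 * θ * (Real.sin θ * aeval (Real.sin θ ^ 2) (lehmerQ k) / (2 ^ k * Real.cos θ ^ (2*k+1))) := by
  induction k with
  | zero => intro θ h0 h1; rw [baseA θ h0 h1]; simp [lehmerQ, lehmerP]
  | succ k ih =>
    intro θ h0 h1
    have hcos := Real.cos_pos_of_mem_Ioo (x := θ) ⟨by linarith [Real.pi_pos], h1⟩
    have hsin := Real.sin_pos_of_pos_of_lt_pi h0 (by linarith)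
    have hg1 := ((Real.hasDerivAt_sin θ).fun_mul (hasDeriv_poly (lehmerQ k) θ)).fun_div
      (((Real.hasDerivAt_cos θ).fun_pow (2*k+1)).const_mul (2^k)) (by positivity)
    have hg2 := ((((Real.hasDerivAt_sin θ).fun_pow 2).fun_mul
      (hasDeriv_poly (lehmerP k) θ)).const_mul 2).fun_div
      (((Real.hasDerivAt_cos θ).fun_pow (2*k)).const_mul (2^k)) (by positivity)
    have hg := hg2.fun_add (((hasDerivAt_id' θ).const_mul 2).fun_mul hg1)
    rw [ser_step cA_bound 1 k _ _ θ h0 h1 ih hg]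
    simp only [lehmerQ, lehmerP, map_add, map_mul, map_sub, map_one, aeval_X, aeval_C, map_ofNat,
      eq_intCast, map_natCast, Int.cast_mul, Int.cast_ofNat, Int.cast_natCast, add_tsub_cancel_right,
      Int.cast_sub, Int.cast_one]
    have e : Real.sin θ ^ 2 = 1 - Real.cos θ ^ 2 := by linarith [Real.sin_sq_add_cos_sq θ]
    generalize (aeval (Real.sin θ ^ 2)) (lehmerQ k) = q
    generalize (aeval (Real.sin θ ^ 2)) (derivative (lehmerQ k)) = q'
    generalize (aeval (Real.sin θ ^ 2)) (lehmerP k) = p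
    generalize (aeval (Real.sin θ ^ 2)) (derivative (lehmerP k)) = p'
    generalize Real.sin θ = s at *
    generalize Real.cos θ = c at *
    rw [show 2 * (k+1) + 1 = 2*k + 3 by ring, show 2 * (k+1) = 2*k + 2 by ring]
    have hk : ((2 * k : ℕ):ℝ) * c ^ (2*k-1) = 2 * k * (c ^ (2*k) / c) := by
      rcases k with _ | k
      · simp
      · rw [show 2 * (k+1) - 1 = 2*k+1 by omega, show 2 * (k+1) = 2*k+1+1 by ring, pow_succ c (2*k+1)]
        push_cast
        field_simp
        ring
    rw [hk, pow_add c (2*k) 3, pow_add c (2*k) 2, pow_add c (2*k) 1]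
    have : (0:ℝ) < c ^ (2*k) := by positivity
    generalize c ^ (2*k) = C at *
    push_cast
    field_simp
    have e4 : s^4 = (1-c^2)^2 := by rw [← e]; ring
    ring_nf
    have e3 : s^3 = s * (1-c^2) := by rw [← e]; ring
    have e5 : s^5 = s * (1-c^2)^2 := by rw [← e]; ring
    simp only [e, e3, e4, e5]
    ring

lemma halfBinom_inv (m : ℕ) :
    (2:ℝ) ^ (2*m+1) / halfBinom m = Real.pi * cB m * (m + 1/2) := by
  have key : ∀ m : ℕ, Real.Gamma ((m:ℝ) + 3/2) =
      Real.sqrt Real.pi * cB m * (m + 1/2) * m.factorial := by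
    intro m
    induction m with
    | zero =>
      simp only [cB]
      rw [show ((0:ℕ):ℝ) + 3/2 = 1/2 + 1 by norm_num, Real.Gamma_add_one (by norm_num),
        Real.Gamma_one_half_eq]
      simp; ring
    | succ m ih =>
      rw [show ((m+1:ℕ):ℝ) + 3/2 = ((m:ℝ) + 3/2) + 1 by push_cast; ring,
        Real.Gamma_add_one (by positivity), ih, Nat.factorial_succ]
      have := cB_rec m
      push_cast
      linear_combination (-(1/2:ℝ)) * ((m:ℝ)+3/2) * Real.sqrt Real.pi * m.factorial * this
  have hG : Real.Gamma (2*(m:ℝ)+2) = (2*m+1).factorial := by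
    rw [← Real.Gamma_nat_eq_factorial]; push_cast; ring_nf
  have hb : (Nat.centralBinom m : ℝ) * m.factorial * m.factorial = (2*m).factorial := by
    have := Nat.choose_mul_factorial_mul_factorial (n := 2*m) (k := m) (by omega)
    rw [show 2*m-m = m by omega] at this
    rw [Nat.centralBinom_eq_two_mul_choose]
    exact_mod_cast this
  unfold halfBinom
  rw [hG, key m, Nat.factorial_succ]
  push_cast
  rw [← hb]
  have h1 : (0:ℝ) < Nat.centralBinom m := by exact_mod_cast Nat.centralBinom_pos m
  have h2 : (0:ℝ) < m.factorial := by positivity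
  have h3 : Real.sqrt Real.pi ^ 2 = Real.pi := Real.sq_sqrt Real.pi_pos.le
  unfold cB
  simp only [mul_pow, h3, div_pow]
  rw [pow_succ, pow_mul, show (2:ℝ)^2 = 4 by norm_num]
  field_simp

open Real in
theorem shifted_log_sine_neg_integer (n : ℤ) (hn : -1 ≤ n) (σ : ℝ) (hσ0 : 0 < σ)
    (hσπ : σ < π) :
    (∑' m : ℕ, (2 * Real.sin (σ / 2)) ^ (2 * (m + 1)) * ((m : ℝ) + 1) ^ n /
          (Nat.choose (2 * (m + 1)) (m + 1) : ℝ)) -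
        σ / π * ∑' m : ℕ, (2 * Real.sin (σ / 2)) ^ (2 * m + 1) * ((m : ℝ) + 1 / 2) ^ n /
          halfBinom m =
      Real.sin (σ / 2) ^ 2 * aeval (Real.sin (σ / 2) ^ 2) (lehmerP (n + 1).toNat) /
        ((2 : ℝ) ^ n * (1 - Real.sin (σ / 2) ^ 2) ^ (n + 1)) := by

  obtain ⟨k, rfl⟩ : ∃ k : ℕ, n = (k:ℤ) - 1 := ⟨(n+1).toNat, by omega⟩
  have h0 : 0 < σ / 2 := by linarith
  have h1 : σ / 2 < π / 2 := by linarith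
  have hA : (∑' m : ℕ, (2 * Real.sin (σ / 2)) ^ (2 * (m + 1)) * ((m : ℝ) + 1) ^ ((k:ℤ)-1) /
          (Nat.choose (2 * (m + 1)) (m + 1) : ℝ)) = serF cA 1 k (Real.sin (σ/2)) := by
    unfold serF
    congr 1; ext m
    have hm : (m:ℝ) + 1 ≠ 0 := by positivity
    rw [← Nat.centralBinom_eq_two_mul_choose, zpow_sub_one₀ hm, zpow_natCast, cA, mul_pow, pow_mul 2 2]
    have hp : (0:ℝ) < Nat.centralBinom (m+1) := by exact_mod_cast Nat.centralBinom_pos _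
    rw [show (2 * (m:ℝ) + (1:ℕ) + 1) / 2 = m + 1 by push_cast; ring]
    field_simp
    norm_num
    ring
  have hB : (∑' m : ℕ, (2 * Real.sin (σ / 2)) ^ (2 * m + 1) * ((m : ℝ) + 1 / 2) ^ ((k:ℤ)-1) /
          halfBinom m) = π * serF cB 0 k (Real.sin (σ/2)) := by
    unfold serF
    rw [← tsum_mul_left]
    congr 1; ext m
    have hm : (m:ℝ) + 1/2 ≠ 0 := by positivity
    have h := halfBinom_inv m
    rw [mul_pow, show ∀ a b c d : ℝ, a * b * c / d = a / d * b * c from fun a b c d => by ring, h,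
      zpow_sub_one₀ hm, zpow_natCast, show (2 * (m:ℝ) + (0:ℕ) + 1) / 2 = m + 1/2 by push_cast; ring,
      add_zero]
    field_simp
  rw [hA, hB, closedA k _ h0 h1, closedB k _ h0 h1]
  have hcos := Real.cos_pos_of_mem_Ioo (x := σ/2) ⟨by linarith [Real.pi_pos], h1⟩
  rw [show ((k:ℤ) - 1 + 1) = k by ring, Int.toNat_natCast, zpow_natCast,
    zpow_sub_one₀ (by norm_num), zpow_natCast, ← Real.cos_sq', ← pow_mul]
  have := Real.pi_pos
  field_simp
  ring
end

section
/- For integer n ≥ 0, Σ_{m=1}^∞ m^n/binom(2m,m) − (1/3)·Σ_{m=0}^∞ (m+1/2)^n/binom(2m+1,m+1/2) = (1/3)·Σ_{k=0}^n B_{n−k}^{(−k)}, where binom(2m+1,m+1/2) = Γ(2m+2)/Γ(m+3/2)² and B_n^{(−k)} are poly-Bernoulli numbers with negative index. (This is Theorem 1.2 specialized to σ = π/3, where 2·sin(π/6) = 1.) -/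
open Polynomial in
theorem aux_uniq (M : ℝ[X] →ₗ[ℝ] ℝ) (h1 : M 1 = 1)
    (hD : ∀ p : ℝ[X], M ((4 * X - 2) * p - (X + 1) * p.comp (X + 1)) = 3 * p.eval 1)
    (Q : ℕ → ℝ[X]) (Q0 : Q 0 = 1)
    (Qs : ∀ j : ℕ, C ((j : ℝ) + 1) * Q (j + 1) = (X - C ((j : ℝ) + 1)) * Q j)
    (Qc : ∀ j : ℕ, C ((j : ℝ) + 1) * (Q (j + 1)).comp (X + 1) = X * Q j)
    (Qe : ∀ j : ℕ, (Q (j + 1)).eval 1 = 0) (j : ℕ) :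
    M (Q j ^ 2) = 1 ∧ M (X * Q j ^ 2) = 2 * ((j : ℝ) + 1) ∧ M (Q (j + 1) ^ 2) = 1 := by
  have hC : ∀ (a : ℝ) (p : ℝ[X]), M (C a * p) = a * M p := by
    intro a p
    rw [← smul_eq_C_mul, map_smul, smul_eq_mul]
  have R : ∀ (j : ℕ) (r : ℝ[X]), M (X ^ 2 * r * Q j ^ 2) =
      ((j : ℝ) + 1) ^ 2 * M (r * Q (j + 1) ^ 2) + 2 * ((j : ℝ) + 1) * M (X * r * Q j ^ 2)
        - ((j : ℝ) + 1) ^ 2 * M (r * Q j ^ 2) := by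
    intro j r
    rw [← hC, ← hC, ← hC, ← map_add, ← map_sub]
    congr 1
    have := Qs j
    simp only [map_mul, map_pow, map_ofNat]
    linear_combination (-r * (C ((j : ℝ) + 1) * Q (j + 1) + (X - C ((j : ℝ) + 1)) * Q j)) * this
  have D : ∀ (j : ℕ) (r : ℝ[X]), ((j : ℝ) + 1) ^ 2 * M ((4 * X - 2) * r * Q (j + 1) ^ 2)
      - M ((X + 1) * r.comp (X + 1) * X ^ 2 * Q j ^ 2) = 0 := by
    intro j r
    have h := hD (r * Q (j + 1) ^ 2)
    rw [eval_mul, eval_pow, Qe] at h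
    have h2 : ((j : ℝ) + 1) ^ 2 * M ((4 * X - 2) * (r * Q (j + 1) ^ 2) - (X + 1) * (r * Q (j + 1) ^ 2).comp (X + 1)) = 0 := by
      rw [h]; ring
    rw [← h2, ← hC, ← hC, ← map_sub]
    congr 1
    have := Qc j
    simp only [map_pow, mul_comp, pow_comp]
    linear_combination ((X + 1) * r.comp (X + 1) * (C ((j : ℝ) + 1) * (Q (j + 1)).comp (X + 1) + X * Q j)) * this
  have n4 : ∀ p : ℝ[X], M (4 * p) = 4 * M p := fun p => by simpa [map_ofNat] using hC 4 p
  have n2 : ∀ p : ℝ[X], M (2 * p) = 2 * M p := fun p => by simpa [map_ofNat] using hC 2 p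
  have e1 := hD 1
  have e2 := hD X
  have f1 : M ((4 * X - 2) * 1 - (X + 1) * (1 : ℝ[X]).comp (X + 1)) = 4 * M X - 2 * M 1 - M X - M 1 := by
    rw [← n4, ← n2, ← map_sub, ← map_sub, ← map_sub]
    congr 1
    simp; ring
  have f2 : M ((4 * X - 2) * X - (X + 1) * (X : ℝ[X]).comp (X + 1)) = 4 * M (X^2) - 2 * M X - M (X ^ 2) - 2 * M X - M 1 := by
    rw [← n4, ← n2, ← map_sub, ← map_sub, ← map_sub, ← map_sub]
    congr 1
    simp; ring
  rw [f1] at e1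
  rw [f2] at e2
  simp only [eval_one, eval_X, h1] at e1 e2
  induction j with
  | zero =>
    have r0 := R 0 1
    simp [Q0, h1] at r0 ⊢
    refine ⟨by linarith, by linarith⟩
  | succ j ih =>
    obtain ⟨hA, hB, hA'⟩ := ih
    have X2 := R j 1
    have X3 := R j X
    have X4 := R j (X ^ 2)
    have X2' := R (j + 1) 1
    have d1 := D j 1
    have d2 := D j X
    have g1 : M ((4 * X - 2) * 1 * Q (j + 1) ^ 2) = 4 * M (X * Q (j + 1) ^ 2) - 2 * M (Q (j+1) ^ 2) := by
      rw [← n4, ← n2, ← map_sub]; congr 1; ring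
    have g2 : M ((X + 1) * (1 : ℝ[X]).comp (X + 1) * X ^ 2 * Q j ^ 2) = M (X ^ 2 * X * Q j ^ 2) + M (X ^ 2 * 1 * Q j ^ 2) := by
      rw [← map_add]; congr 1; simp; ring
    have g3 : M ((4 * X - 2) * X * Q (j + 1) ^ 2) = 4 * M (X ^ 2 * 1 * Q (j + 1) ^ 2) - 2 * M (X * Q (j+1) ^ 2) := by
      rw [← n4, ← n2, ← map_sub]; congr 1; ring
    have g4 : M ((X + 1) * (X : ℝ[X]).comp (X + 1) * X ^ 2 * Q j ^ 2) = M (X ^ 2 * X ^ 2 * Q j ^ 2) + 2 * M (X ^ 2 * X * Q j ^ 2) + M (X ^ 2 * 1 * Q j ^ 2) := by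
      rw [← n2, ← map_add, ← map_add]; congr 1; simp; ring
    rw [g1, g2] at d1
    rw [g3, g4] at d2
    have k1 : M (X * 1 * Q j ^ 2) = M (X * Q j ^ 2) := by rw [mul_one]
    have k2 : M (X * X * Q j ^ 2) = M (X ^ 2 * 1 * Q j ^ 2) := by congr 1; ring
    have k3 : M (X * X ^ 2 * Q j ^ 2) = M (X ^ 2 * X * Q j ^ 2) := by congr 1; ring
    have k4 : M (X ^ 2 * Q j ^ 2) = M (X ^ 2 * 1 * Q j ^ 2) := by congr 1; ring
    have k5 : M (X ^ 2 * Q (j + 1) ^ 2) = M (X ^ 2 * 1 * Q (j + 1) ^ 2) := by congr 1; ring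
    have k6 : M (X * 1 * Q (j + 1) ^ 2) = M (X * Q (j + 1) ^ 2) := by rw [mul_one]
    rw [k1, one_mul, one_mul, hA, hB, hA'] at X2
    rw [k2, X2, hB] at X3
    rw [k3, k4, k5, X3, X2] at X4
    rw [k6, one_mul, one_mul, hA'] at X2'
    rw [hA', X3, X2] at d1
    rw [X4, X3, X2, X2'] at d2
    push_cast at *
    generalize M (X * Q (j + 1) ^ 2) = B' at *
    generalize M (Q (j + 1 + 1) ^ 2) = A'' at *
    have hc : ((j : ℝ) + 1) ≠ 0 := by positivity
    have he : ((j : ℝ) + 1 + 1) ≠ 0 := by positivity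
    generalize (j : ℝ) + 1 = c at *
    have hB' : B' = 2 * (c + 1) := by
      have : 3 * c ^ 2 * (B' - 2 * (c + 1)) = 0 := by linear_combination d1
      have := (mul_eq_zero.1 this).resolve_left (by positivity)
      linarith
    refine ⟨hA', hB', ?_⟩
    subst hB'
    have : 3 * c ^ 2 * (c + 1) ^ 2 * (A'' - 1) = 0 := by linear_combination d2
    have := (mul_eq_zero.1 this).resolve_left (by positivity)
    linarith

noncomputable def auxQ : ℕ → Polynomial ℝ
  | 0 => 1
  | (j + 1) => Polynomial.C (((j : ℝ) + 1)⁻¹) * (Polynomial.X - Polynomial.C ((j : ℝ) + 1)) * auxQ j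

open Polynomial in
theorem auxQ_s (j : ℕ) : C ((j : ℝ) + 1) * auxQ (j + 1) = (X - C ((j : ℝ) + 1)) * auxQ j := by
  have hc : ((j : ℝ) + 1) ≠ 0 := by positivity
  have : C ((j : ℝ) + 1) * C (((j : ℝ) + 1)⁻¹) = 1 := by rw [← C_mul, mul_inv_cancel₀ hc, C_1]
  rw [auxQ]
  linear_combination ((X - C ((j : ℝ) + 1)) * auxQ j) * this

open Polynomial in
theorem auxQ_c (j : ℕ) : C ((j : ℝ) + 1) * (auxQ (j + 1)).comp (X + 1) = X * auxQ j := by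
  induction j with
  | zero => simp [auxQ]
  | succ j ih =>
    have hc : ((j : ℝ) + 1) ≠ 0 := by positivity
    have h1 := congrArg (fun p => p.comp (X + 1)) (auxQ_s (j + 1))
    simp only [mul_comp, sub_comp, X_comp, C_comp] at h1
    have h2 := auxQ_s j
    have h0 : C ((j : ℝ) + 1) ≠ 0 := C_ne_zero.2 hc
    apply mul_left_cancel₀ h0
    rw [h1]
    push_cast
    simp only [C_add, C_1] at *
    linear_combination (X - (C (j : ℝ) + 1)) * ih - X * h2

open Polynomial in
theorem auxQ_e (j : ℕ) : (auxQ (j + 1)).eval 1 = 0 := by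
  induction j with
  | zero => simp [auxQ]
  | succ j ih => rw [auxQ, eval_mul, ih, mul_zero]

noncomputable def auxd : ℕ → ℕ → ℝ
  | 0, 0 => 1
  | 0, (_ + 1) => 0
  | (n + 1), 0 => auxd n 0
  | (n + 1), (j + 1) => ((j : ℝ) + 2) * auxd n (j + 1) + ((j : ℝ) + 1) * auxd n j

theorem auxd_zero (n j : ℕ) (h : n < j) : auxd n j = 0 := by
  induction n generalizing j with
  | zero => cases j with
    | zero => omega
    | succ j => rfl
  | succ n ih => cases j with
    | zero => omega
    | succ j => rw [auxd, ih _ (by omega), ih _ (by omega)]; ring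

theorem auxd_n_zero (n : ℕ) : auxd n 0 = 1 := by
  induction n with
  | zero => rfl
  | succ n ih => rw [auxd, ih]

noncomputable def auxD (j : ℕ) : PowerSeries ℝ := PowerSeries.mk (fun n => auxd n j)

noncomputable def auxe (n j : ℕ) : ℝ := PowerSeries.coeff n (auxD j * auxD j)

theorem auxe_eq (n j : ℕ) : auxe n j = ∑ k ∈ Finset.range (n + 1), auxd k j * auxd (n - k) j := by
  rw [auxe, PowerSeries.coeff_mul, Finset.Nat.sum_antidiagonal_eq_sum_range_succ_mk]
  simp [auxD]

theorem auxe_zero (n j : ℕ) (h : n < j) : auxe n j = 0 := by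
  rw [auxe_eq]
  apply Finset.sum_eq_zero
  intro k hk
  rw [Finset.mem_range] at hk
  rw [auxd_zero k j (by omega), zero_mul]

theorem auxD_zero : (1 - PowerSeries.X) * auxD 0 = 1 := by
  ext n
  rw [sub_mul, one_mul, map_sub]
  cases n with
  | zero => simp [auxD, auxd]
  | succ n => simp [auxD, PowerSeries.coeff_succ_X_mul, auxd, PowerSeries.coeff_one]

open PowerSeries in
theorem auxD_succ (j : ℕ) : (1 - C ((j : ℝ) + 2) * X) * auxD (j + 1) =
    C ((j : ℝ) + 1) * X * auxD j := by
  ext n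
  rw [sub_mul, one_mul, map_sub, mul_assoc, mul_assoc, coeff_C_mul, coeff_C_mul]
  cases n with
  | zero => simp [auxD, auxd]
  | succ n => rw [coeff_succ_X_mul, coeff_succ_X_mul]; simp [auxD, auxd]

theorem auxe_rec0 (n : ℕ) : auxe (n + 2) 0 - 2 * auxe (n + 1) 0 + auxe n 0 = 0 := by
  simp [auxe_eq, auxd_n_zero]; ring

open PowerSeries in
theorem auxe_rec (n j : ℕ) : auxe (n + 2) (j + 1) - 2 * ((j : ℝ) + 2) * auxe (n + 1) (j + 1)
    + ((j : ℝ) + 2) ^ 2 * auxe n (j + 1) = ((j : ℝ) + 1) ^ 2 * auxe n j := by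
  have h : auxD (j+1) * auxD (j+1) - C (2 * ((j : ℝ) + 2)) * (X * (auxD (j+1) * auxD (j+1)))
      + C (((j : ℝ) + 2)^2) * (X * (X * (auxD (j+1) * auxD (j+1)))) =
      C (((j : ℝ) + 1)^2) * (X * (X * (auxD j * auxD j))) := by
    have := auxD_succ j
    simp only [map_mul, map_pow, map_ofNat]
    linear_combination ((1 - C ((j : ℝ) + 2) * X) * auxD (j + 1) + 
    C ((j : ℝ) + 1) * X * auxD j) * this
  have h2 := congrArg (coeff (n + 2)) h
  simpa only [map_add, map_sub, coeff_C_mul, coeff_succ_X_mul, auxe] using h2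

open Polynomial in
theorem aux_expand (N n : ℕ) (hn : n + 2 ≤ N) : (X : ℝ[X]) ^ (n + 1) = ∑ j ∈ Finset.range N,
    (C (auxe (n + 1) j) * auxQ j ^ 2 + C (auxe n j) * ((X - C (2 * ((j : ℝ) + 1))) * auxQ j ^ 2)) := by
  induction n with
  | zero =>
    rw [Finset.eventually_constant_sum (N := 2) _ hn]
    · simp [Finset.sum_range_succ, auxe_eq, auxd, auxQ]
      have : (C 2 : ℝ[X]) = 2 := rfl
      simp only [this]
      ring
    · intro j hj
      simp [auxe_zero _ _ (show 0 + 1 < j by omega), auxe_zero _ _ (show 0 < j by omega)]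
  | succ n ih =>
    have ih := ih (by omega)
    rw [pow_succ, ih, ← sub_eq_zero, Finset.sum_mul, ← Finset.sum_sub_distrib]
    have := Finset.sum_range_sub (fun j : ℕ => C ((j : ℝ) ^ 2 * auxe n (j - 1)) * auxQ j ^ 2) N
    rw [auxe_zero n (N - 1) (by omega)] at this
    simp only [mul_zero, C_0, zero_mul, CharP.cast_eq_zero, ne_eq, OfNat.ofNat_ne_zero, not_false_eq_true, zero_pow, sub_zero] at this
    rw [← this]
    apply Finset.sum_congr rfl
    intro j _
    have hq := auxQ_s j
    have hr : auxe (n + 2) j = 2 * ((j : ℝ) + 1) * auxe (n + 1) j - ((j : ℝ) + 1) ^ 2 * auxe n j + (j : ℝ) ^ 2 * auxe n (j - 1) := by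
      cases j with
      | zero => have := auxe_rec0 n; push_cast; linarith
      | succ j => have := auxe_rec n j; push_cast; linarith
    rw [show n + 1 + 1 = n + 2 by rfl, hr]
    simp only [Nat.add_sub_cancel, map_add, map_sub, map_mul, map_pow, map_ofNat, Nat.cast_add, Nat.cast_one] at hq ⊢
    linear_combination (-(C (auxe n j)) * ((C (j:ℝ) + C 1) * auxQ (j+1) + (X - (C (j:ℝ) + C 1)) * auxQ j)) * hq

open Polynomial in
theorem aux_main (M : ℝ[X] →ₗ[ℝ] ℝ) (h1 : M 1 = 1)
    (hD : ∀ p : ℝ[X], M ((4 * X - 2) * p - (X + 1) * p.comp (X + 1)) = 3 * p.eval 1) (n : ℕ) :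
    M (X ^ n) = ∑ j ∈ Finset.range (n + 1), auxe n j := by
  cases n with
  | zero => simp [h1, auxe_eq, auxd]
  | succ n =>
    rw [aux_expand (n + 1 + 1) n le_rfl, map_sum]
    apply Finset.sum_congr rfl
    intro j _
    obtain ⟨a, b, -⟩ := aux_uniq M h1 hD auxQ rfl auxQ_s auxQ_c auxQ_e j
    rw [sub_mul, ← smul_eq_C_mul, ← smul_eq_C_mul, ← smul_eq_C_mul]
    simp only [map_add, map_smul, map_sub, a, b, smul_eq_mul]
    ring

theorem negPolylog_eq_s17 (k : ℕ) : ∀ z : ℝ, z ≠ 1 → negPolylog k z =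
    ∑ j ∈ Finset.range (k + 1), auxd k j * (z / (1 - z)) ^ (j + 1) := by
  induction k with
  | zero => intro z hz; simp [negPolylog, auxd]
  | succ k ih =>
    intro z hz
    have hz' : 1 - z ≠ 0 := sub_ne_zero.2 (Ne.symm hz)
    rw [negPolylog]
    have hev : negPolylog k =ᶠ[nhds z] fun z => ∑ j ∈ Finset.range (k + 1), auxd k j * (z / (1 - z)) ^ (j + 1) := by
      filter_upwards [isOpen_ne.mem_nhds hz] with y hy using ih y hy
    rw [hev.deriv_eq]
    have h0 : HasDerivAt (fun z : ℝ => z / (1 - z)) (1 / (1 - z) ^ 2) z := by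
      refine ((hasDerivAt_id z).div ((hasDerivAt_id z).const_sub 1) hz').congr_deriv ?_
      simp
    have h1 : HasDerivAt (fun z : ℝ => ∑ j ∈ Finset.range (k + 1), auxd k j * (z / (1 - z)) ^ (j + 1))
        (∑ j ∈ Finset.range (k + 1), auxd k j * (((j + 1 : ℕ) : ℝ) * (z / (1 - z)) ^ j * (1 / (1 - z) ^ 2))) z := by
      apply HasDerivAt.fun_sum
      intro j _
      exact (h0.pow (j + 1)).const_mul _
    rw [h1.deriv]
    set w := z / (1 - z) with hw
    have hww : z * (1 / (1 - z) ^ 2) = w + w ^ 2 := by rw [hw]; field_simp; ring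
    rw [Finset.sum_range_succ' _ (k + 1)]
    have e1 : ∀ j ∈ Finset.range (k + 1), auxd (k + 1) (j + 1) * w ^ (j + 1 + 1) =
       ((j : ℝ) + 2) * auxd k (j + 1) * w ^ (j + 2) + ((j : ℝ) + 1) * auxd k j * w ^ (j + 2) := by
      intro j _; rw [auxd]; ring
    rw [Finset.sum_congr rfl e1, Finset.sum_add_distrib]
    have e2 := Finset.sum_range_succ' (fun j : ℕ => ((j : ℝ) + 1) * auxd k j * w ^ (j + 1)) (k + 1)
    rw [Finset.sum_range_succ, auxd_zero k (k + 1) (by omega)] at e2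
    have e3 : ∑ j ∈ Finset.range (k + 1), ((j : ℝ) + 2) * auxd k (j + 1) * w ^ (j + 2) =
      ∑ j ∈ Finset.range (k + 1), (((j + 1 : ℕ) : ℝ) + 1) * auxd k (j + 1) * w ^ (j + 1 + 1) := by
      apply Finset.sum_congr rfl; intro j _; push_cast; ring
    have e4 : z * ∑ j ∈ Finset.range (k + 1), auxd k j * (((j + 1 : ℕ) : ℝ) * w ^ j * (1 / (1 - z) ^ 2))
       = ∑ j ∈ Finset.range (k + 1), ((j : ℝ) + 1) * auxd k j * w ^ (j + 1) + ∑ j ∈ Finset.range (k + 1), ((j : ℝ) + 1) * auxd k j * w ^ (j + 2) := by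
      rw [Finset.mul_sum, ← Finset.sum_add_distrib]
      apply Finset.sum_congr rfl
      intro j _
      push_cast
      linear_combination (auxd k j * ((j : ℝ) + 1) * w ^ j) * hww
    rw [e4, e3]
    simp only [auxd, Nat.cast_zero] at e2 ⊢
    linarith

noncomputable def auxphi (j : ℕ) (x : ℝ) : ℝ := Real.exp x * (Real.exp x - 1) ^ j

theorem auxphi_contDiff (j : ℕ) (n : WithTop ℕ∞) : ContDiff ℝ n (auxphi j) := by
  unfold auxphi
  fun_prop

theorem auxphi_deriv (j : ℕ) : deriv (auxphi (j + 1)) =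
    fun x => ((j : ℝ) + 2) * auxphi (j + 1) x + ((j : ℝ) + 1) * auxphi j x := by
  ext x
  have h := (Real.hasDerivAt_exp x).mul (((Real.hasDerivAt_exp x).sub_const 1).pow (j + 1))
  have : HasDerivAt (auxphi (j + 1)) _ x := h
  rw [this.deriv]
  simp only [auxphi, Pi.pow_apply]
  push_cast
  ring

theorem auxphi_deriv0 : deriv (auxphi 0) = auxphi 0 := by
  have : auxphi 0 = Real.exp := by ext x; simp [auxphi]
  rw [this, Real.deriv_exp]

theorem auxphi_iter (n j : ℕ) : iteratedDeriv n (auxphi j) 0 = auxd n j := by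
  induction n generalizing j with
  | zero => cases j <;> simp [auxphi, auxd]
  | succ n ih =>
    rw [iteratedDeriv_succ']
    cases j with
    | zero => rw [auxphi_deriv0, ih, auxd]
    | succ j =>
      rw [auxphi_deriv, auxd, ← ih, ← ih]
      rw [iteratedDeriv_fun_add]
      · rw [iteratedDeriv_const_mul_field, iteratedDeriv_const_mul_field]
      · exact (contDiff_const.mul (auxphi_contDiff _ _)).contDiffAt
      · exact (contDiff_const.mul (auxphi_contDiff _ _)).contDiffAt

theorem polyBernoulli_eq (n k : ℕ) : polyBernoulli n k =
    ∑ j ∈ Finset.range (k + 1), auxd k j * auxd n j := by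
  have : (fun x : ℝ => if x = 0 then 1 else
      negPolylog k (1 - Real.exp (-x)) / (1 - Real.exp (-x))) =
      fun x => ∑ j ∈ Finset.range (k + 1), auxd k j * auxphi j x := by
    ext x
    split_ifs with hx
    · subst hx
      rw [Finset.sum_range_succ']
      simp [auxphi, auxd_n_zero]
    · have hE := Real.exp_pos x
      have h1 : 1 - Real.exp (-x) ≠ 0 := by
        intro h
        have : Real.exp (-x) = 1 := by linarith
        rw [Real.exp_eq_one_iff] at this
        exact hx (by linarith)
      rw [negPolylog_eq_s17 k _ (by have := Real.exp_pos (-x); linarith), Finset.sum_div]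
      apply Finset.sum_congr rfl
      intro j _
      have h2 : (1 - Real.exp (-x)) / (1 - (1 - Real.exp (-x))) = Real.exp x - 1 := by
        rw [Real.exp_neg]; field_simp; simp
      have h3 : Real.exp x * (1 - Real.exp (-x)) = Real.exp x - 1 := by
        rw [Real.exp_neg]; field_simp
      rw [h2, auxphi, div_eq_iff h1, pow_succ]
      linear_combination (-auxd k j * (Real.exp x - 1) ^ j) * h3
  rw [polyBernoulli, this, iteratedDeriv_fun_sum]
  · apply Finset.sum_congr rfl
    intro j _
    rw [iteratedDeriv_const_mul_field, auxphi_iter]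
  · intro j _
    exact (contDiff_const.mul (auxphi_contDiff _ _)).contDiffAt

theorem aux_rhs (n : ℕ) : ∑ j ∈ Finset.range (n + 1), auxe n j =
    ∑ k ∈ Finset.range (n + 1), polyBernoulli (n - k) k := by
  simp only [auxe_eq]
  rw [Finset.sum_comm]
  apply Finset.sum_congr rfl
  intro k hk
  rw [polyBernoulli_eq]
  rw [Finset.mem_range] at hk
  symm
  apply Finset.sum_subset
  · intro j; simp only [Finset.mem_range]; omega
  · intro j _ hj
    rw [Finset.mem_range] at hj
    rw [auxd_zero k j (by omega), zero_mul]

section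
variable (u : ℕ → ℝ) (θ : ℝ)

theorem aux_bd (h0 : ∀ m, 0 < u m) (hθ : 0 < θ)
    (hr : ∀ m : ℕ, u (m + 1) * (4 * (m + θ) + 2) = (m + θ + 1) * u m) (m : ℕ) :
    u m ≤ u 0 * (1 / 2) ^ m := by
  induction m with
  | zero => simp
  | succ m ih =>
    have h1 := hr m
    have h2 := h0 m
    have h3 : u (m + 1) ≤ u m / 2 := by
      have hp : (0 : ℝ) < 4 * (m + θ) + 2 := by positivity
      have hm : (0 : ℝ) ≤ m := by positivity
      rw [← mul_le_mul_iff_left₀ hp, h1]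
      nlinarith
    rw [pow_succ]
    linarith

theorem aux_summable (h0 : ∀ m, 0 < u m) (hθ : 0 < θ) (hθ1 : θ ≤ 1)
    (hr : ∀ m : ℕ, u (m + 1) * (4 * (m + θ) + 2) = (m + θ + 1) * u m) (n : ℕ) (r : ℝ)
    (hr0 : 0 ≤ r) (hr1 : r < 2) :
    Summable (fun m : ℕ => ((m : ℝ) + θ) ^ n * (u m * r ^ m)) := by
  rcases hr0.eq_or_lt with rfl | hrp
  · apply summable_of_ne_finset_zero (s := {0})
    intro m hm
    simp at hm
    simp [hm]
  have hs : Summable (fun m : ℕ => (((m + 1 : ℕ) : ℝ)) ^ n * (r / 2) ^ (m + 1)) :=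
    (summable_nat_add_iff (f := fun m : ℕ => ((m : ℝ)) ^ n * (r / 2) ^ m) 1).2 
      (summable_pow_mul_geometric_of_norm_lt_one n (by rw [Real.norm_of_nonneg (by linarith)]; linarith))
  apply Summable.of_nonneg_of_le _ _ (hs.mul_left (u 0 * (2 / r)))
  · intro m
    have := h0 m
    positivity
  · intro m
    have hb := aux_bd u θ h0 hθ hr m
    have h00 := h0 0
    have : u m * r ^ m ≤ u 0 * (1 / 2) ^ m * r ^ m := by gcongr
    calc ((m : ℝ) + θ) ^ n * (u m * r ^ m) ≤ ((m + 1 : ℕ) : ℝ) ^ n * (u 0 * (1 / 2) ^ m * r ^ m) := by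
          push_cast
          have := h0 m
          gcongr
      _ = _ := by
          rw [pow_succ, div_pow, div_pow, one_pow]
          field_simp

open Polynomial in
theorem aux_summable_poly (h : ∀ n, Summable (fun m : ℕ => ((m : ℝ) + θ) ^ n * u m)) (p : ℝ[X]) :
    Summable (fun m : ℕ => p.eval ((m : ℝ) + θ) * u m) := by
  induction p using Polynomial.induction_on' with
  | add p q hp hq => simpa [add_mul] using hp.add hq
  | monomial n a => simpa [mul_assoc] using (h n).mul_left a

open Polynomial in
noncomputable def auxL (h : ∀ n, Summable (fun m : ℕ => ((m : ℝ) + θ) ^ n * u m)) : ℝ[X] →ₗ[ℝ] ℝ where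
  toFun p := ∑' m : ℕ, p.eval ((m : ℝ) + θ) * u m
  map_add' p q := by
    rw [← (aux_summable_poly u θ h p).tsum_add (aux_summable_poly u θ h q)]
    simp [add_mul]
  map_smul' a p := by
    simp [mul_assoc, tsum_mul_left]

open Polynomial in
theorem auxL_D (h : ∀ n, Summable (fun m : ℕ => ((m : ℝ) + θ) ^ n * u m))
    (hr : ∀ m : ℕ, u (m + 1) * (4 * (m + θ) + 2) = (m + θ + 1) * u m) (p : ℝ[X]) :
    auxL u θ h ((4 * X - 2) * p - (X + 1) * p.comp (X + 1)) = (4 * θ - 2) * p.eval θ * u 0 := by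
  have hs := aux_summable_poly u θ h ((4 * X - 2) * p)
  have h1 := hs.tsum_eq_zero_add
  have hs' := (summable_nat_add_iff 1).2 hs
  have : auxL u θ h ((4 * X - 2) * p - (X + 1) * p.comp (X + 1)) =
     ∑' m : ℕ, ((((4 * X - 2) * p).eval ((m : ℝ) + θ) * u m) - ((4 * X - 2) * p).eval (((m + 1 : ℕ) : ℝ) + θ) * u (m + 1)) := by
    show ∑' m : ℕ, _ = _
    apply tsum_congr
    intro m
    have := hr m
    have e : ((m : ℝ) + 1 + θ) = m + θ + 1 := by ring
    simp only [eval_sub, eval_mul, eval_add, eval_comp, eval_X, eval_ofNat, eval_one, Nat.cast_add, Nat.cast_one, e]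
    linear_combination (p.eval ((m : ℝ) + θ + 1)) * this
  rw [this, hs.tsum_sub hs', h1]
  simp

theorem aux_deriv (h0 : ∀ m, 0 < u m) (hθ : 0 < θ) (hθ1 : θ ≤ 1)
    (hr : ∀ m : ℕ, u (m + 1) * (4 * (m + θ) + 2) = (m + θ + 1) * u m) (q : ℝ)
    (hq : |q| < 3 / 2) :
    ∃ U' V : ℝ, HasDerivAt (fun q : ℝ => ∑' m : ℕ, u m * q ^ m) U' q ∧
      q * V = (∑' m : ℕ, u m * q ^ m) - u 0 ∧
      4 * U' + (4 * θ - 2) * V = q * U' + (1 + θ) * ∑' m : ℕ, u m * q ^ m := by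
  have hS := aux_summable u θ h0 hθ hθ1 hr
  have s1 : Summable (fun m : ℕ => u m * ((m : ℝ) * (3 / 2) ^ (m - 1))) := by
    have := (hS 1 (3 / 2) (by norm_num) (by norm_num)).mul_left (2 / 3)
    apply Summable.of_nonneg_of_le _ _ this
    · intro m
      have := h0 m
      positivity
    · intro m
      have hm := h0 m
      cases m with
      | zero => simp; positivity
      | succ m =>
        have : (0:ℝ) ≤ θ * (u (m + 1) * (3 / 2) ^ m) := by positivity
        simp only [Nat.add_sub_cancel]
        rw [pow_succ (3 / 2 : ℝ)]
        linarith
  have hab : ∀ (y : ℝ), |y| < 3 / 2 → Summable (fun m : ℕ => u m * y ^ m) := by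
    intro y hy
    apply Summable.of_norm_bounded (hS 0 (3 / 2) (by norm_num) (by norm_num))
    intro m
    have := h0 m
    rw [norm_mul, norm_pow, Real.norm_of_nonneg this.le, Real.norm_eq_abs, pow_zero, one_mul]
    gcongr
  have hbd : ∀ (m : ℕ) (y : ℝ), |y| < 3 / 2 → ‖u m * ((m : ℝ) * y ^ (m - 1))‖ ≤ u m * ((m : ℝ) * (3 / 2) ^ (m - 1)) := by
    intro m y hy
    have := h0 m
    rw [norm_mul, norm_mul, norm_pow, Real.norm_of_nonneg this.le, Real.norm_eq_abs, Real.norm_eq_abs, Nat.abs_cast]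
    gcongr
  have hd : HasDerivAt (fun q : ℝ => ∑' m : ℕ, u m * q ^ m) (∑' m : ℕ, u m * ((m : ℝ) * q ^ (m - 1))) q := by
    apply hasDerivAt_tsum_of_isPreconnected (g := fun (m : ℕ) (q : ℝ) => u m * q ^ m)
      (g' := fun (m : ℕ) (q : ℝ) => u m * ((m : ℝ) * q ^ (m - 1))) s1 (t := Metric.ball (0 : ℝ) (3 / 2)) Metric.isOpen_ball
      (convex_ball _ _).isPreconnected (y₀ := 0)
    · intro m y _
      exact (hasDerivAt_pow m y).const_mul _
    · intro m y hy
      exact hbd m y (by simpa using hy)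
    · simp
    · exact hab 0 (by norm_num)
    · simpa using hq
  have s2 : Summable (fun m : ℕ => u m * ((m : ℝ) * q ^ (m - 1))) :=
    Summable.of_norm_bounded s1 (fun m => hbd m q hq)
  have s3 := hab q hq
  have s2' := (summable_nat_add_iff 1).2 s2
  have s4 : Summable (fun m : ℕ => u (m + 1) * q ^ m) := by
    have hb : ∀ m : ℕ, ‖u (m + 1) * q ^ m‖ ≤ u (m + 1) * (((m + 1 : ℕ) : ℝ) * (3 / 2) ^ (m + 1 - 1)) := by
      intro m
      have := h0 (m + 1)
      rw [norm_mul, norm_pow, Real.norm_of_nonneg this.le, Real.norm_eq_abs]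
      have h5 : |q| ^ m ≤ (3 / 2) ^ m := by gcongr
      have h6 : (1 : ℝ) * (3 / 2) ^ m ≤ ((m + 1 : ℕ) : ℝ) * (3 / 2) ^ m := by
        gcongr
        push_cast
        have : (0:ℝ) ≤ m := by positivity
        linarith
      simp only [Nat.add_sub_cancel]
      gcongr
      linarith
    exact Summable.of_norm_bounded ((summable_nat_add_iff 1).2 s1) hb
  refine ⟨_, ∑' m : ℕ, u (m + 1) * q ^ m, hd, ?_, ?_⟩
  · rw [s3.tsum_eq_zero_add, ← tsum_mul_left]
    simp only [pow_zero, mul_one, add_sub_cancel_left]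
    apply tsum_congr
    intro m
    ring
  · have e1 : q * ∑' m : ℕ, u m * ((m : ℝ) * q ^ (m - 1)) = ∑' m : ℕ, u m * (m : ℝ) * q ^ m := by
      rw [← tsum_mul_left]
      apply tsum_congr
      intro m
      cases m with
      | zero => simp
      | succ m => simp only [Nat.add_sub_cancel]; ring
    have s5 : Summable (fun m : ℕ => u m * (m : ℝ) * q ^ m) := by
      apply (s2.mul_left q).congr
      intro m
      cases m with
      | zero => simp
      | succ m => simp only [Nat.add_sub_cancel]; ring
    rw [e1, s2.tsum_eq_zero_add, Nat.cast_zero, zero_mul, mul_zero, zero_add, ← tsum_mul_left, ← tsum_mul_left, ← tsum_mul_left,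
      ← (s2'.mul_left 4).tsum_add (s4.mul_left _), ← s5.tsum_add (s3.mul_left _)]
    apply tsum_congr
    intro m
    have := hr m
    simp only [Nat.add_sub_cancel]
    push_cast
    linear_combination q ^ m * this

end

theorem aux_q_lt (x : ℝ) (hx : x ∈ Set.Icc 0 (Real.pi / 6)) : |4 * Real.sin x ^ 2| < 3 / 2 := by
  have hpi := Real.pi_pos
  have h1 : Real.sin x ≤ 1 / 2 := by
    rw [← Real.sin_pi_div_six]
    exact Real.sin_le_sin_of_le_of_le_pi_div_two (by linarith [hx.1]) (by linarith) hx.2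
  have h2 : 0 ≤ Real.sin x := Real.sin_nonneg_of_nonneg_of_le_pi hx.1 (by linarith [hx.2])
  rw [abs_of_nonneg (by positivity)]
  nlinarith

theorem aux_const (f : ℝ → ℝ) (h : ∀ x ∈ Set.Icc 0 (Real.pi / 6), HasDerivAt f 0 x) :
    f (Real.pi / 6) = f 0 := by
  have hpi := Real.pi_pos
  exact constant_of_has_deriv_right_zero (a := 0) (b := Real.pi / 6)
    (fun x hx => (h x hx).continuousAt.continuousWithinAt)
    (fun x hx => (h x ⟨hx.1, hx.2.le⟩).hasDerivWithinAt) _ ⟨by positivity, le_rfl⟩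

theorem aux_chain (U : ℝ → ℝ) (U' x : ℝ) (h : HasDerivAt U U' (4 * Real.sin x ^ 2)) :
    HasDerivAt (fun x => U (4 * Real.sin x ^ 2)) (U' * (8 * Real.sin x * Real.cos x)) x := by
  have h1 : HasDerivAt (fun x => 4 * Real.sin x ^ 2) (8 * Real.sin x * Real.cos x) x := by
    refine (((Real.hasDerivAt_sin x).pow 2).const_mul 4).congr_deriv ?_
    push_cast
    ring
  exact HasDerivAt.comp x h h1

theorem aux_cos3 (x : ℝ) : HasDerivAt (fun x => Real.cos x ^ 3) (-3 * Real.cos x ^ 2 * Real.sin x) x := by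
  refine ((Real.hasDerivAt_cos x).pow 3).congr_deriv ?_
  push_cast
  ring

theorem aux_T (u : ℕ → ℝ) (h0 : ∀ m, 0 < u m)
    (hr : ∀ m : ℕ, u (m + 1) * (4 * (m + 1 / 2) + 2) = (m + 1 / 2 + 1) * u m) :
    3 * Real.sqrt 3 / 8 * ∑' m, u m = u 0 := by
  set U := (fun q : ℝ => ∑' m : ℕ, u m * q ^ m) with hU
  have key := aux_const (fun x => Real.cos x ^ 3 * U (4 * Real.sin x ^ 2)) ?_
  · have h3 : Real.sqrt 3 ^ 2 = 3 := Real.sq_sqrt (by norm_num)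
    have hU1 : U 1 = ∑' m, u m := by simp [hU]
    have hU0 : U 0 = u 0 := by
      simp only [hU]
      rw [tsum_eq_single 0]
      · simp
      · intro m hm; simp [hm]
    simp only [Real.cos_pi_div_six, Real.sin_pi_div_six, Real.cos_zero, Real.sin_zero] at key
    norm_num at key
    rw [hU1, hU0] at key
    rw [← key]
    linear_combination (-(Real.sqrt 3 / 8) * ∑' m, u m) * h3
  · intro x hx
    obtain ⟨U', V, hd, hV, hE⟩ := aux_deriv u (1 / 2) h0 (by norm_num) (by norm_num) hr _ (aux_q_lt x hx)
    refine ((aux_cos3 x).mul (aux_chain U U' x hd)).congr_deriv ?_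
    change 4 * U' + (4 * (1 / 2) - 2) * V = 4 * Real.sin x ^ 2 * U' + (1 + 1 / 2) * U (4 * Real.sin x ^ 2) at hE
    have hc := Real.sin_sq_add_cos_sq x
    linear_combination (2 * Real.cos x ^ 2 * Real.sin x) * hE + (8 * Real.cos x ^ 2 * Real.sin x * U') * hc

theorem aux_S (u : ℕ → ℝ) (h0 : ∀ m, 0 < u m) (hu : u 0 = 1 / 2)
    (hr : ∀ m : ℕ, u (m + 1) * (4 * (m + 1) + 2) = (m + 1 + 1) * u m) :
    3 * Real.sqrt 3 / 16 * ∑' m, u m = Real.pi / 24 + Real.sqrt 3 / 16 := by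
  set U := (fun q : ℝ => ∑' m : ℕ, u m * q ^ m) with hU
  have key := aux_const (fun x => Real.sin x * (Real.cos x ^ 3 * U (4 * Real.sin x ^ 2)) - x / 4 - Real.sin x * Real.cos x / 4) ?_
  · have h3 : Real.sqrt 3 ^ 2 = 3 := Real.sq_sqrt (by norm_num)
    have hU1 : U 1 = ∑' m, u m := by simp [hU]
    simp only [Real.cos_pi_div_six, Real.sin_pi_div_six, Real.cos_zero, Real.sin_zero] at key
    norm_num at key
    rw [hU1] at key
    linear_combination key - (Real.sqrt 3 / 16 * ∑' m, u m) * h3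
  · intro x hx
    obtain ⟨U', V, hd, hV, hE⟩ := aux_deriv u 1 h0 (by norm_num) (by norm_num) hr _ (aux_q_lt x hx)
    have hsc := (Real.hasDerivAt_sin x).mul (Real.hasDerivAt_cos x)
    refine ((((Real.hasDerivAt_sin x).mul ((aux_cos3 x).mul (aux_chain U U' x hd))).sub
      ((hasDerivAt_id x).div_const 4)).sub (hsc.div_const 4)).congr_deriv ?_
    change 4 * U' + (4 * 1 - 2) * V = 4 * Real.sin x ^ 2 * U' + (1 + 1) * U (4 * Real.sin x ^ 2) at hE
    change 4 * Real.sin x ^ 2 * V = U (4 * Real.sin x ^ 2) - u 0 at hV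
    rw [hu] at hV
    simp only [Pi.mul_apply]
    have hc : Real.cos x ^ 2 = 1 - Real.sin x ^ 2 := by linarith [Real.sin_sq_add_cos_sq x]
    generalize U (4 * Real.sin x ^ 2) = W at *
    generalize Real.sin x = s at *
    generalize Real.cos x = c at *
    have hW : 16 * s ^ 2 * (1 - s ^ 2) * U' = 1 - (2 - 8 * s ^ 2) * W := by
      linear_combination 4 * s ^ 2 * hE - 2 * hV
    have h4 : c ^ 4 = (1 - s ^ 2) ^ 2 := by rw [← hc]; ring
    ring_nf
    rw [h4, hc]
    linear_combination ((1 - s ^ 2) / 2) * hW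

theorem aux_halfBinom_pos (m : ℕ) : 0 < 1 / halfBinom m := by
  unfold halfBinom
  have h1 : 0 < Real.Gamma (2 * m + 2) := Real.Gamma_pos_of_pos (by positivity)
  have h2 : 0 < Real.Gamma ((m : ℝ) + 3 / 2) := Real.Gamma_pos_of_pos (by positivity)
  positivity

theorem aux_halfBinom_rec (m : ℕ) : 1 / halfBinom (m + 1) * (4 * (m + 1 / 2) + 2) =
    (m + 1 / 2 + 1) * (1 / halfBinom m) := by
  unfold halfBinom
  have h1 : 0 < Real.Gamma (2 * m + 2) := Real.Gamma_pos_of_pos (by positivity)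
  have h2 : 0 < Real.Gamma ((m : ℝ) + 3 / 2) := Real.Gamma_pos_of_pos (by positivity)
  have e1 : Real.Gamma (2 * ((m + 1 : ℕ) : ℝ) + 2) = (2 * m + 3) * ((2 * m + 2) * Real.Gamma (2 * m + 2)) := by
    rw [← Real.Gamma_add_one (by positivity), show (2 * (m : ℝ) + 3) = 2 * m + 2 + 1 by ring,
      ← Real.Gamma_add_one (by positivity)]
    push_cast; congr 1; ring
  have e2 : Real.Gamma (((m + 1 : ℕ) : ℝ) + 3 / 2) = (m + 3 / 2) * Real.Gamma (m + 3 / 2) := by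
    rw [← Real.Gamma_add_one (by positivity)]
    push_cast; congr 1; ring
  rw [e1, e2]
  field_simp
  ring

theorem aux_halfBinom_zero : 1 / halfBinom 0 = Real.pi / 4 := by
  have h : Real.Gamma (3 / 2) = 1 / 2 * Real.sqrt Real.pi := by
    rw [← Real.Gamma_one_half_eq, ← Real.Gamma_add_one (by norm_num)]
    norm_num
  unfold halfBinom
  simp only [Nat.cast_zero, mul_zero, zero_add, h, Real.Gamma_two]
  rw [mul_pow, Real.sq_sqrt Real.pi_pos.le]
  field_simp
  norm_num

theorem aux_binom_rec (m : ℕ) : 1 / (Nat.choose (2 * (m + 1 + 1)) (m + 1 + 1) : ℝ) * (4 * (m + 1) + 2) =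
    (m + 1 + 1) * (1 / (Nat.choose (2 * (m + 1)) (m + 1) : ℝ)) := by
  have h := Nat.succ_mul_centralBinom_succ (m + 1)
  simp only [Nat.centralBinom] at h
  have h' : ((m : ℝ) + 1 + 1) * (Nat.choose (2 * (m + 1 + 1)) (m + 1 + 1) : ℝ) = 2 * (2 * (m + 1) + 1) * (Nat.choose (2 * (m + 1)) (m + 1) : ℝ) := by
    exact_mod_cast h
  have p1 : (0 : ℝ) < (Nat.choose (2 * (m + 1)) (m + 1) : ℝ) := by
    exact_mod_cast Nat.choose_pos (by omega)
  have p2 : (0 : ℝ) < (Nat.choose (2 * (m + 1 + 1)) (m + 1 + 1) : ℝ) := by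
    exact_mod_cast Nat.choose_pos (by omega)
  field_simp
  linarith

theorem shifted_log_sine_pi_div_three (n : ℕ) :
    (∑' m : ℕ, ((m : ℝ) + 1) ^ n / (Nat.choose (2 * (m + 1)) (m + 1) : ℝ)) -
        1 / 3 * ∑' m : ℕ, ((m : ℝ) + 1 / 2) ^ n / halfBinom m =
      1 / 3 * ∑ k ∈ Finset.range (n + 1), polyBernoulli (n - k) k := by
  set u : ℕ → ℝ := fun m => 1 / (Nat.choose (2 * (m + 1)) (m + 1) : ℝ) with hu
  set v : ℕ → ℝ := fun m => 1 / halfBinom m with hv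
  have u0 : ∀ m, 0 < u m := by
    intro m
    have p1 : (0 : ℝ) < (Nat.choose (2 * (m + 1)) (m + 1) : ℝ) := by
      exact_mod_cast Nat.choose_pos (by omega)
    simp only [hu]
    positivity
  have v0 : ∀ m, 0 < v m := aux_halfBinom_pos
  have ur : ∀ m : ℕ, u (m + 1) * (4 * (m + 1) + 2) = (m + 1 + 1) * u m := aux_binom_rec
  have vr : ∀ m : ℕ, v (m + 1) * (4 * (m + 1 / 2) + 2) = (m + 1 / 2 + 1) * v m := aux_halfBinom_rec
  have uz : u 0 = 1 / 2 := by norm_num [hu]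
  have vz : v 0 = Real.pi / 4 := aux_halfBinom_zero
  have us : ∀ n, Summable (fun m : ℕ => ((m : ℝ) + 1) ^ n * u m) := by
    intro n
    simpa using aux_summable u 1 u0 (by norm_num) (by norm_num) ur n 1 (by norm_num) (by norm_num)
  have vs : ∀ n, Summable (fun m : ℕ => ((m : ℝ) + 1 / 2) ^ n * v m) := by
    intro n
    simpa using aux_summable v (1 / 2) v0 (by norm_num) (by norm_num) vr n 1 (by norm_num) (by norm_num)
  have hM := aux_main ((3 : ℝ) • auxL u 1 us - auxL v (1 / 2) vs) ?_ ?_ n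
  · rw [aux_rhs] at hM
    rw [← hM]
    have e1 : auxL u 1 us (Polynomial.X ^ n) = ∑' m : ℕ, ((m : ℝ) + 1) ^ n / (Nat.choose (2 * (m + 1)) (m + 1) : ℝ) := by
      show ∑' m : ℕ, _ = _
      apply tsum_congr
      intro m
      simp [hu, div_eq_mul_inv]
    have e2 : auxL v (1 / 2) vs (Polynomial.X ^ n) = ∑' m : ℕ, ((m : ℝ) + 1 / 2) ^ n / halfBinom m := by
      show ∑' m : ℕ, _ = _
      apply tsum_congr
      intro m
      simp [hv, div_eq_mul_inv]
    rw [LinearMap.sub_apply, LinearMap.smul_apply, e1, e2, smul_eq_mul]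
    ring
  · have e1 : auxL u 1 us 1 = ∑' m : ℕ, u m := by
      show ∑' m : ℕ, _ = _
      simp
    have e2 : auxL v (1 / 2) vs 1 = ∑' m : ℕ, v m := by
      show ∑' m : ℕ, _ = _
      simp
    rw [LinearMap.sub_apply, LinearMap.smul_apply, e1, e2, smul_eq_mul]
    have hS := aux_S u u0 uz ur
    have hT := aux_T v v0 vr
    rw [vz] at hT
    have h3 : 0 < Real.sqrt 3 := by positivity
    have : Real.sqrt 3 * (3 * ∑' m : ℕ, u m - ∑' m : ℕ, v m - 1) = 0 := by
      linear_combination 16 * hS - 8 / 3 * hT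
    have := (mul_eq_zero.1 this).resolve_left h3.ne'
    linarith
  · intro p
    rw [LinearMap.sub_apply, LinearMap.smul_apply, auxL_D u 1 us ur, auxL_D v (1 / 2) vs vr, uz, smul_eq_mul]
    ring
end
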